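/- arXiv:2110.09339 — 4 statements merged into one kernel-verified Lean document; each statement's English description precedes it below -/
import Mathlib

section
/- Let K ≥ 1 and let v : ℤ → ℝ be a K-periodic real potential with one-sided discrete Schrödinger operator H₊ on ℓ²(ℕ). Then the finite section method is applicable to H₊ (i.e. H₊ is bijective and the one-sided finite sections are stable) if and only if |tr(M⁽⁰⁾)| > 2 and each of the matrices M⁽⁰⁾, M̃⁽⁰⁾, M̃⁽¹⁾, …, M̃⁽ᴷ⁻¹⁾ has its (2,1)-entry nonzero or its (1,1)-entry of absolute value greater than 1. -/
/-!
Write `p` for the left Dirichlet solution of `u (k+1) + u (k-1) + v k * u k = 0` (`p (-1) = 0`,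
`p 0 = 1`). Up to sign `p (n+1)` is the determinant of the `n`-th section, and the matrices
`tp w a k` of partial transfer products collect such solutions with arbitrary starting site.

*The conditions imply stability.* If `|tr M| > 2`, then `M` has real eigenvalues `L`, `l = 1 / L`
with `|L| > 1`, and by Cayley–Hamilton every `m ↦ p (m K + i)` is a combination of `L ^ m` and
`l ^ m`. Put `R = |L| ^ (1/K)`. Then all Dirichlet solutions are `O(R ^ k)` (`p_upper`), and the
entry conditions on `M` and on the reversed products say exactly that no coefficient of `L ^ m` in
`p` vanishes (`lead_ne`), so `|p n| ≥ c R ^ n` for large `n` (`p_lower`). Hence Green's function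
of the section, a product of a left and a right Dirichlet solution divided by `p (n+1)`
(`green_eq`), decays like `R ^ (-|i-k|)` uniformly in `n`, and the Schur test bounds the inverse
(`stable_of_cond`).

*Stability implies bijectivity.* Stability bounds `Hp` from below (`bddBelow_of_stable`), so its
range is closed; `Hp` being symmetric, a vector orthogonal to the range lies in the kernel, which
is trivial (`bijective_of_stable`).

*Bijectivity and stability imply the conditions.* A preimage of the basis vector `e₀` gives a
decaying solution of the recurrence with value `-1` at site `-1`. This is impossible when
`|tr M| ≤ 2`, by the conserved quadratic form of `z (m+2) = t z (m+1) - z m` (`rec_zero`), or when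
`M` is upper triangular with `|M 0 0| ≤ 1` (`cond_of_surj`). Applying the section to `p` leaves only
`-p (n+1)` in the last coordinate, so stability gives `∑ k ≤ n, (p k)² ≤ C² (p (n+1))²` for large
`n`. If the condition failed for the `j`-th reversed product, then `p` would be geometric with a
ratio of absolute value at most `1` along `j + K ℕ`, contradicting this (`cond_of_stable`).
-/

noncomputable section

open Matrix

/-- The `n`-th finite section of the one-sided discrete Schrödinger operator with
potential `v`. -/
def schFinSecPlus (v : ℤ → ℝ) (n : ℕ) : Matrix (Fin (n + 1)) (Fin (n + 1)) ℂ :=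
  Matrix.of fun i j =>
    if (i : ℕ) = (j : ℕ) then ((v ((i : ℕ) : ℤ)) : ℂ)
    else if (i : ℕ) = (j : ℕ) + 1 ∨ (j : ℕ) = (i : ℕ) + 1 then 1 else 0

/-- Stability of the sequence of one-sided finite sections. -/
def schStablePlus (v : ℤ → ℝ) : Prop :=
  ∃ n₀ : ℕ, ∃ C : ℝ, 0 < C ∧ ∀ n : ℕ, n₀ ≤ n →
    IsUnit (schFinSecPlus v n) ∧
    ‖Matrix.toEuclideanCLM (𝕜 := ℂ) ((schFinSecPlus v n)⁻¹)‖ ≤ C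

/-- The transfer matrix `T(n, E) = !![E - v n, -1; 1, 0]` at energy `E`. -/
def transfer (v : ℤ → ℝ) (E : ℝ) (n : ℤ) : Matrix (Fin 2) (Fin 2) ℝ :=
  !![E - v n, -1; 1, 0]

/-- The monodromy matrix `M⁽ʲ⁾ = T(K-1+j) ⋯ T(1+j) T(j)` (at energy `0`). -/
def monodromy (v : ℤ → ℝ) (K : ℕ) (j : ℤ) : Matrix (Fin 2) (Fin 2) ℝ :=
  (((List.range K).map fun i => transfer v 0 ((i : ℤ) + j)).reverse).prod

/-- The reversed-order monodromy matrix `M̃⁽ʲ⁾ = T(j) T(1+j) ⋯ T(K-1+j)` (at energy `0`). -/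
def monodromyRev (v : ℤ → ℝ) (K : ℕ) (j : ℤ) : Matrix (Fin 2) (Fin 2) ℝ :=
  ((List.range K).map fun i => transfer v 0 ((i : ℤ) + j)).prod

/-- The test `(2,1)-entry ≠ 0 or |(1,1)-entry| > 1` for a `2 × 2` matrix. -/
def checkM (M : Matrix (Fin 2) (Fin 2) ℝ) : Prop :=
  M 1 0 ≠ 0 ∨ 1 < |M 0 0|

section

open Filter Topology

/-! ### Transfer products -/

/-- One-step transfer matrix for the potential value `x` at energy `0`. -/
def tstep (x : ℝ) : Matrix (Fin 2) (Fin 2) ℝ := !![-x, -1; 1, 0]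

/-- The product `T(a+k-1) ⋯ T(a+1) T(a)` of `k` transfer matrices, the site `a` acting first.
Its `(0,0)` entry is, up to the sign `(-1)^k`, the determinant of the section on the sites
`a, …, a+k-1`. -/
def tp (w : ℕ → ℝ) (a : ℕ) : ℕ → Matrix (Fin 2) (Fin 2) ℝ
  | 0 => 1
  | k + 1 => tstep (w (a + k)) * tp w a k

lemma tp_zero (w : ℕ → ℝ) (a : ℕ) : tp w a 0 = 1 := rfl

lemma tp_succ (w : ℕ → ℝ) (a k : ℕ) : tp w a (k + 1) = tstep (w (a + k)) * tp w a k := rfl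

lemma tp_add (w : ℕ → ℝ) (a k l : ℕ) : tp w a (k + l) = tp w (a + k) l * tp w a k := by
  induction l with
  | zero => simp [tp_zero]
  | succ l ih => rw [← add_assoc, tp_succ, ih, tp_succ, Matrix.mul_assoc, add_assoc]

lemma tp_succ' (w : ℕ → ℝ) (a k : ℕ) : tp w a (k + 1) = tp w (a + 1) k * tstep (w a) := by
  rw [add_comm k 1, tp_add]
  simp [tp_succ, tp_zero]

lemma tp_succ_0 (w : ℕ → ℝ) (a k : ℕ) (j : Fin 2) :
    tp w a (k + 1) 0 j = -w (a + k) * tp w a k 0 j - tp w a k 1 j := by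
  simp [tp_succ, tstep, Matrix.mul_apply, Fin.sum_univ_two]; ring

lemma tp_succ_1 (w : ℕ → ℝ) (a k : ℕ) (j : Fin 2) : tp w a (k + 1) 1 j = tp w a k 0 j := by
  simp [tp_succ, tstep, Matrix.mul_apply, Fin.sum_univ_two]

lemma tp_succ_01 (w : ℕ → ℝ) (a k : ℕ) : tp w a (k + 1) 0 1 = -tp w (a + 1) k 0 0 := by
  simp [tp_succ', tstep, Matrix.mul_apply, Fin.sum_univ_two]

lemma tp_succ_00' (w : ℕ → ℝ) (a k : ℕ) :
    tp w a (k + 1) 0 0 = -w a * tp w (a + 1) k 0 0 + tp w (a + 1) k 0 1 := by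
  simp [tp_succ', tstep, Matrix.mul_apply, Fin.sum_univ_two]; ring

lemma tstep_det (x : ℝ) : (tstep x).det = 1 := by simp [tstep, Matrix.det_fin_two]

lemma tp_det (w : ℕ → ℝ) (a k : ℕ) : (tp w a k).det = 1 := by
  induction k with
  | zero => simp [tp_zero]
  | succ k ih => rw [tp_succ, Matrix.det_mul, ih, tstep_det, mul_one]

lemma tp_per {w : ℕ → ℝ} {K : ℕ} (hw : ∀ n, w (n + K) = w n) (a k : ℕ) :
    tp w (a + K) k = tp w a k := by
  induction k with
  | zero => rfl
  | succ k ih => rw [tp_succ, tp_succ, ih, add_right_comm, hw]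

lemma tp_per_mul {w : ℕ → ℝ} {K : ℕ} (hw : ∀ n, w (n + K) = w n) (a k m : ℕ) :
    tp w (a + m * K) k = tp w a k := by
  induction m with
  | zero => simp
  | succ m ih => rw [Nat.succ_mul, ← add_assoc, tp_per hw, ih]

lemma tp_pow {w : ℕ → ℝ} {K : ℕ} (hw : ∀ n, w (n + K) = w n) (a m : ℕ) :
    tp w a (m * K) = tp w a K ^ m := by
  induction m with
  | zero => simp [tp_zero]
  | succ m ih => rw [Nat.succ_mul, add_comm, tp_add, tp_per hw, ih, pow_succ]

lemma tp_mul_add {w : ℕ → ℝ} {K : ℕ} (hw : ∀ n, w (n + K) = w n) (a m l : ℕ) :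
    tp w a (m * K + l) = tp w a l * tp w a K ^ m := by
  rw [tp_add, tp_per_mul hw, tp_pow hw]

/-- Periodicity makes the monodromy matrices at different starting sites conjugate. -/
lemma tp_conj {w : ℕ → ℝ} {K : ℕ} (hw : ∀ n, w (n + K) = w n) (a l : ℕ) :
    tp w (a + l) K * tp w a l = tp w a l * tp w a K := by
  rw [← tp_add, add_comm, tp_add, tp_per hw]

lemma tp_trace {w : ℕ → ℝ} {K : ℕ} (hw : ∀ n, w (n + K) = w n) (l : ℕ) :
    (tp w l K).trace = (tp w 0 K).trace := by
  have h := tp_conj hw 0 l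
  have hu : IsUnit (tp w 0 l).det := by rw [tp_det]; exact isUnit_one
  rw [zero_add] at h
  have : tp w l K = tp w 0 l * tp w 0 K * (tp w 0 l)⁻¹ := by
    rw [← h, Matrix.mul_assoc, Matrix.mul_nonsing_inv _ hu, mul_one]
  rw [this, Matrix.trace_mul_comm, ← Matrix.mul_assoc, Matrix.nonsing_inv_mul _ hu, one_mul]

lemma monodromy_eq (v : ℤ → ℝ) (K j : ℕ) :
    monodromy v K j = tp (fun n => v n) j K := by
  induction K with
  | zero => simp [monodromy, tp_zero]
  | succ k ih =>
    rw [tp_succ, ← ih]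
    simp [monodromy, List.range_succ, transfer, tstep, add_comm]

/-- Each transfer matrix satisfies `Tᵀ = D T D` with `D = diag(1, -1)`, so reversing the order of
a product amounts to transposing and conjugating by `D`. -/
lemma monodromyRev_eq (v : ℤ → ℝ) (K j : ℕ) :
    monodromyRev v K j =
      !![1, 0; 0, -1] * (tp (fun n => v n) j K)ᵀ * !![1, 0; 0, -1] := by
  induction K with
  | zero =>
    simp [monodromyRev, tp_zero]
    ext i j; fin_cases i <;> fin_cases j <;> simp
  | succ k ih =>
    have h : monodromyRev v (k + 1) j = monodromyRev v k j * tstep (v ((k : ℤ) + j)) := by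
      simp [monodromyRev, List.range_succ, transfer, tstep]
    rw [h, ih, tp_succ, Matrix.transpose_mul]
    have : !![(1 : ℝ), 0; 0, -1] * tstep (v ((k : ℤ) + j)) =
        (tstep (v ((k : ℤ) + j)))ᵀ * !![1, 0; 0, -1] := by
      ext i j; fin_cases i <;> fin_cases j <;>
        simp [tstep, Matrix.mul_apply, Fin.sum_univ_two]
    rw [Matrix.mul_assoc _ _ (tstep _), this]
    push_cast
    simp only [Matrix.mul_assoc, add_comm]

lemma checkM_rev (v : ℤ → ℝ) (K j : ℕ) :
    checkM (monodromyRev v K j) ↔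
      (tp (fun n => v n) j K 0 1 ≠ 0 ∨ 1 < |tp (fun n => v n) j K 0 0|) := by
  rw [monodromyRev_eq]
  simp [checkM, Matrix.mul_apply, Fin.sum_univ_two, Matrix.vecMul, dotProduct]

lemma sq_of_det_one {M : Matrix (Fin 2) (Fin 2) ℝ} (h : M.det = 1) :
    M * M = M.trace • M - 1 := by
  rw [Matrix.det_fin_two] at h
  rw [Matrix.trace_fin_two]
  ext i j; fin_cases i <;> fin_cases j <;>
    simp [Matrix.mul_apply, Fin.sum_univ_two] <;> linarith

lemma pow_rec {M : Matrix (Fin 2) (Fin 2) ℝ} (h : M.det = 1) (m : ℕ) :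
    M ^ (m + 2) = M.trace • M ^ (m + 1) - M ^ m := by
  rw [pow_add, pow_two, sq_of_det_one h, mul_sub, mul_one, Matrix.mul_smul, pow_succ]

/-- Cayley–Hamilton: along full periods, every solution coefficient obeys a second-order
recurrence with constant coefficients. -/
lemma p_rec {w : ℕ → ℝ} {K : ℕ} (hw : ∀ n, w (n + K) = w n) (a l m : ℕ) (i j : Fin 2) :
    tp w a ((m + 2) * K + l) i j = (tp w 0 K).trace * tp w a ((m + 1) * K + l) i j
      - tp w a (m * K + l) i j := by
  rw [tp_mul_add hw, tp_mul_add hw, tp_mul_add hw, pow_rec (tp_det _ _ _), tp_trace hw, mul_sub,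
    Matrix.mul_smul]
  simp

/-- Closed form of a sequence with characteristic roots `L` and `l`. -/
lemma rec_closed {z : ℕ → ℝ} {t L l : ℝ} (hz : ∀ m, z (m + 2) = t * z (m + 1) - z m)
    (hs : L + l = t) (hp : L * l = 1) (m : ℕ) :
    (L - l) * z m = L ^ m * (z 1 - l * z 0) - l ^ m * (z 1 - L * z 0) := by
  subst hs
  induction m using Nat.twoStepInduction with
  | zero => ring
  | one => ring
  | more m ih1 ih2 =>
    rw [hz, mul_sub, mul_left_comm, ih1, ih2]
    have e1 : L ^ m = L ^ m * (L * l) := by rw [hp, mul_one]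
    have e2 : l ^ m = l ^ m * (L * l) := by rw [hp, mul_one]
    linear_combination (-(z 1 - l * z 0)) * e1 + (z 1 - L * z 0) * e2

lemma exists_eigs {t : ℝ} (ht : 2 < |t|) :
    ∃ L l : ℝ, L + l = t ∧ L * l = 1 ∧ 1 < |L| ∧ |l| < 1 := by
  have h4 : 0 ≤ t ^ 2 - 4 := by
    have := sq_abs t; nlinarith
  have hs := Real.sq_sqrt h4
  set s := √(t ^ 2 - 4)
  have hs0 : 0 ≤ s := Real.sqrt_nonneg _
  obtain ⟨L, l, h1, h2, h3⟩ : ∃ L l : ℝ, L + l = t ∧ L * l = 1 ∧ 1 < |L| := by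
    rcases lt_abs.1 ht with h | h
    · refine ⟨(t + s) / 2, (t - s) / 2, by ring, by nlinarith, lt_abs.2 (Or.inl (by linarith))⟩
    · refine ⟨(t - s) / 2, (t + s) / 2, by ring, by nlinarith, lt_abs.2 (Or.inr (by linarith))⟩
  refine ⟨L, l, h1, h2, h3, ?_⟩
  have : |L| * |l| = 1 := by rw [← abs_mul, h2, abs_one]
  nlinarith [abs_nonneg l]

lemma exists_bound (K : ℕ) (f : ℕ → ℝ) : ∃ C : ℝ, 0 < C ∧ ∀ l < K, f l ≤ C := by
  refine ⟨1 + ∑ l ∈ Finset.range K, |f l|, ?_, fun l hl => ?_⟩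
  · have := Finset.sum_nonneg (s := Finset.range K) (fun l _ => abs_nonneg (f l))
    linarith
  · have := Finset.single_le_sum (f := fun l => |f l|) (fun l _ => abs_nonneg (f l))
      (Finset.mem_range.2 hl)
    have h2 := le_abs_self (f l)
    linarith

lemma exists_root {x : ℝ} (hx : 1 < x) {K : ℕ} (hK : 1 ≤ K) : ∃ R : ℝ, 1 < R ∧ R ^ K = x :=
  ⟨x ^ ((K : ℝ)⁻¹), Real.one_lt_rpow hx (by positivity),
    Real.rpow_inv_natCast_pow (by linarith) (by omega)⟩

/-- All Dirichlet solutions, whatever the starting site, grow at most like `R ^ k`. -/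
lemma p_upper {w : ℕ → ℝ} {K : ℕ} (hK : 1 ≤ K) (hw : ∀ n, w (n + K) = w n)
    {L l R : ℝ} (hs : L + l = (tp w 0 K).trace) (hp : L * l = 1) (hL : 1 < |L|) (hl : |l| < 1)
    (hR : 1 < R) (hRK : R ^ K = |L|) :
    ∃ C : ℝ, 0 < C ∧ ∀ a k, |tp w a k 0 0| ≤ C * R ^ k := by
  have key : ∀ a i, ∃ C : ℝ, ∀ m, |tp w a (m * K + i) 0 0| ≤ C * |L| ^ m := by
    intro a i
    have hne : 0 < |L - l| := by
      rw [abs_pos, sub_ne_zero]; rintro rfl; linarith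
    have hc := rec_closed (z := fun m => tp w a (m * K + i) 0 0)
      (fun m => p_rec hw a i m 0 0) hs hp
    beta_reduce at hc
    set A := tp w a (1 * K + i) 0 0 - l * tp w a (0 * K + i) 0 0
    set B := tp w a (1 * K + i) 0 0 - L * tp w a (0 * K + i) 0 0
    refine ⟨(|A| + |B|) / |L - l|, fun m => ?_⟩
    rw [div_mul_eq_mul_div, le_div_iff₀ hne, mul_comm, ← abs_mul, hc]
    have h1 : |l| ^ m ≤ |L| ^ m := pow_le_pow_left₀ (abs_nonneg _) (by linarith) m
    calc |L ^ m * A - l ^ m * B| ≤ |L ^ m * A| + |l ^ m * B| := abs_sub _ _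
      _ = |L| ^ m * |A| + |l| ^ m * |B| := by rw [abs_mul, abs_mul, abs_pow, abs_pow]
      _ ≤ |L| ^ m * |A| + |L| ^ m * |B| := by gcongr
      _ = _ := by ring
  choose C hC using key
  choose C' hC'0 hC' using fun a => exists_bound K (C a)
  obtain ⟨C'', hC''0, hC''⟩ := exists_bound K C'
  refine ⟨C'', hC''0, fun a k => ?_⟩
  have ha : tp w a k = tp w (a % K) k := by
    conv_lhs => rw [← Nat.mod_add_div' a K]
    exact tp_per_mul hw _ _ _
  have hk : k / K * K + k % K = k := Nat.div_add_mod' k K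
  have h1 := hC (a % K) (k % K) (k / K)
  rw [hk] at h1
  rw [ha]
  calc _ ≤ _ := h1
    _ ≤ C'' * |L| ^ (k / K) := by
      gcongr
      exact (hC' _ _ (Nat.mod_lt _ hK)).trans (hC'' _ (Nat.mod_lt _ hK))
    _ = C'' * R ^ (k / K * K) := by rw [← hRK, ← pow_mul, mul_comm K]
    _ ≤ C'' * R ^ k := by
      gcongr
      · exact hR.le
      · exact Nat.div_mul_le_self k K

/-- The coefficient of the growing mode in `p(0, mK+i)` does not vanish: the condition on the
monodromy matrix says that the left Dirichlet solution excites the growing mode, the condition on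
the reversed one that the growing mode does not vanish at site `i`. -/
lemma lead_ne {w : ℕ → ℝ} {K : ℕ} (hw : ∀ n, w (n + K) = w n)
    {L l : ℝ} (hs : L + l = (tp w 0 K).trace) (hp : L * l = 1) (hl : |l| < 1)
    (hc : checkM (tp w 0 K)) {i : ℕ}
    (hi : tp w i K 0 1 ≠ 0 ∨ 1 < |tp w i K 0 0|) :
    tp w 0 (1 * K + i) 0 0 - l * tp w 0 (0 * K + i) 0 0 ≠ 0 := by
  intro h
  have hcj := tp_conj hw 0 i
  have hdet := tp_det w 0 i
  have hM := tp_det w 0 K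
  have htr := tp_trace hw i
  rw [tp_mul_add hw, tp_mul_add hw, pow_one, pow_zero, mul_one] at h
  rw [zero_add] at hcj
  rw [← hs] at htr
  have hs' := hs
  generalize tp w 0 i = S at *
  generalize tp w 0 K = M at *
  generalize tp w i K = N at *
  rw [Matrix.det_fin_two] at hdet hM
  rw [Matrix.trace_fin_two] at hs' htr
  have e00 := congrFun₂ hcj 0 0
  have e01 := congrFun₂ hcj 0 1
  simp only [Matrix.mul_apply, Fin.sum_univ_two] at h e00 e01
  -- `(α, β)` is the first column of `M - l`, and `(0, y)` its image under `S`
  obtain ⟨α, hα⟩ : ∃ α, α = M 0 0 - l := ⟨_, rfl⟩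
  obtain ⟨β, hβ⟩ : ∃ β, β = M 1 0 := ⟨_, rfl⟩
  obtain ⟨y, hy⟩ : ∃ y, y = S 1 0 * α + S 1 1 * β := ⟨_, rfl⟩
  have h0 : S 0 0 * α + S 0 1 * β = 0 := by rw [hα, hβ]; linarith
  have hα' : α = -(S 0 1 * y) := by rw [hy]; linear_combination (-α) * hdet + S 1 1 * h0
  have hβ' : β = S 0 0 * y := by rw [hy]; linear_combination (-β) * hdet - S 1 0 * h0
  have hy0 : y ≠ 0 := by
    rintro rfl
    have hα0 : M 0 0 = l := by rw [mul_zero, neg_zero] at hα'; linarith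
    have hβ0 : M 1 0 = 0 := by rw [← hβ, hβ', mul_zero]
    rcases hc with hc | hc
    · exact hc hβ0
    · rw [hα0] at hc; linarith
  -- `M (α, β) = L (α, β)`
  have m0 : M 0 0 * α + M 0 1 * β = L * α := by
    rw [hα, hβ]
    linear_combination (-1 : ℝ) * hM - (M 0 0) * hs' + hp
  have m1 : M 1 0 * α + M 1 1 * β = L * β := by
    rw [hα, hβ]
    linear_combination (-M 1 0) * hs'
  have n01 : N 0 1 * y = 0 := by
    rw [hy]
    linear_combination α * e00 + β * e01 + S 0 0 * m0 + S 0 1 * m1 - N 0 0 * h0 + L * h0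
  have n01' : N 0 1 = 0 := (mul_eq_zero.1 n01).resolve_right hy0
  have e10 := congrFun₂ hcj 1 0
  have e11 := congrFun₂ hcj 1 1
  simp only [Matrix.mul_apply, Fin.sum_univ_two] at e10 e11
  have n11 : (N 1 1 - L) * y = 0 := by
    linear_combination α * e10 + β * e11 + S 1 0 * m0 + S 1 1 * m1 - N 1 0 * h0 + (N 1 1 - L) * hy
  have n11' : N 1 1 = L := sub_eq_zero.1 ((mul_eq_zero.1 n11).resolve_right hy0)
  have n00 : N 0 0 = l := by linarith
  rcases hi with hi | hi
  · exact hi n01'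
  · rw [n00] at hi; linarith

/-- Under the entry conditions the left Dirichlet solution grows at least like `R ^ n`. -/
lemma p_lower {w : ℕ → ℝ} {K : ℕ} (hK : 1 ≤ K) (hw : ∀ n, w (n + K) = w n)
    {L l R : ℝ} (hs : L + l = (tp w 0 K).trace) (hp : L * l = 1) (hL : 1 < |L|) (hl : |l| < 1)
    (hR : 1 < R) (hRK : R ^ K = |L|) (hc : checkM (tp w 0 K))
    (hi : ∀ i < K, tp w i K 0 1 ≠ 0 ∨ 1 < |tp w i K 0 0|) :
    ∃ D : ℝ, 0 < D ∧ ∃ n₀ : ℕ, ∀ n, n₀ ≤ n → R ^ n ≤ D * |tp w 0 n 0 0| := by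
  have key : ∀ i, ∃ D : ℝ, ∃ N : ℕ, i < K → ∀ m, N ≤ m →
      R ^ (m * K + i) ≤ D * |tp w 0 (m * K + i) 0 0| := by
    intro i
    by_cases hiK : i < K
    swap
    · exact ⟨0, 0, fun h => absurd h hiK⟩
    have hA := lead_ne hw hs hp hl hc (hi i hiK)
    have hcl := rec_closed (z := fun m => tp w 0 (m * K + i) 0 0)
      (fun m => p_rec hw 0 i m 0 0) hs hp
    beta_reduce at hcl
    set A := tp w 0 (1 * K + i) 0 0 - l * tp w 0 (0 * K + i) 0 0
    set B := tp w 0 (1 * K + i) 0 0 - L * tp w 0 (0 * K + i) 0 0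
    have hA0 : 0 < |A| := abs_pos.2 hA
    obtain ⟨N, hN⟩ := ((tendsto_pow_atTop_atTop_of_one_lt hL).eventually_ge_atTop
      (2 * |B| / |A|)).exists_forall_of_atTop
    refine ⟨2 * R ^ K * |L - l| / |A|, N, fun _ m hm => ?_⟩
    have h1 := hN m hm
    rw [div_le_iff₀ hA0] at h1
    have h2 : |L| ^ m * |A| - |B| ≤ |L - l| * |tp w 0 (m * K + i) 0 0| := by
      rw [← abs_mul, hcl]
      have h3 : |l| ^ m * |B| ≤ |B| :=
        mul_le_of_le_one_left (abs_nonneg _) (pow_le_one₀ (abs_nonneg _) hl.le)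
      have h4 := abs_sub_abs_le_abs_sub (L ^ m * A) (l ^ m * B)
      rw [abs_mul, abs_mul, abs_pow, abs_pow] at h4
      linarith
    have h5 : R ^ (m * K + i) ≤ R ^ K * |L| ^ m := by
      rw [← hRK, ← pow_mul, ← pow_add]
      exact pow_le_pow_right₀ hR.le (by rw [mul_comm K m]; omega)
    rw [div_mul_eq_mul_div, le_div_iff₀ hA0]
    have hRK0 : 0 < R ^ K := by positivity
    calc R ^ (m * K + i) * |A| ≤ R ^ K * |L| ^ m * |A| := by gcongr
      _ = R ^ K * (|L| ^ m * |A|) := by ring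
      _ ≤ R ^ K * (2 * (|L - l| * |tp w 0 (m * K + i) 0 0|)) := by
        refine mul_le_mul_of_nonneg_left ?_ hRK0.le
        linarith
      _ = _ := by ring
  choose D N hDN using key
  obtain ⟨D', hD0, hD'⟩ := exists_bound K D
  obtain ⟨N', hN0, hN'⟩ := exists_bound K (fun i => (N i : ℝ))
  obtain ⟨N'', hN''⟩ := exists_nat_ge N'
  refine ⟨D', hD0, N'' * K, fun n hn => ?_⟩
  have hk : n / K * K + n % K = n := Nat.div_add_mod' n K
  have hlt := Nat.mod_lt n hK
  have h1 := hDN (n % K) hlt (n / K) (by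
    have : N'' ≤ n / K := (Nat.le_div_iff_mul_le hK).2 hn
    have h2 : (N (n % K) : ℝ) ≤ N'' := (hN' _ hlt).trans hN''
    have h3 : N (n % K) ≤ N'' := by exact_mod_cast h2
    omega)
  rw [hk] at h1
  refine h1.trans ?_
  gcongr
  exact hD' _ hlt

/-! ### Green's function of a section and stability -/

/-- Action of the tridiagonal section on the truncation of a sequence. -/
lemma sec_mulVec (v : ℤ → ℝ) (n : ℕ) (X : ℕ → ℂ) (i : Fin (n + 1)) :
    (schFinSecPlus v n *ᵥ fun j : Fin (n + 1) => X j) i =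
      (v ((i : ℕ) : ℤ) : ℂ) * X i + (if (i : ℕ) < n then X (i + 1) else 0)
        + (if (i : ℕ) = 0 then 0 else X (i - 1)) := by
  obtain ⟨i, hi⟩ := i
  simp only [Matrix.mulVec, dotProduct, schFinSecPlus, Matrix.of_apply]
  rw [Fin.sum_univ_eq_sum_range (fun j : ℕ =>
    (if i = j then ((v (i : ℤ)) : ℂ) else if i = j + 1 ∨ j = i + 1 then 1 else 0) * X j) (n + 1)]
  have h : ∀ j ∈ Finset.range (n + 1),
      (if i = j then ((v (i : ℤ)) : ℂ) else if i = j + 1 ∨ j = i + 1 then 1 else 0) * X j =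
      (if i = j then (v (i : ℤ) : ℂ) * X j else 0) + (if i + 1 = j then X j else 0)
        + (if i - 1 = j then (if i = 0 then 0 else X j) else 0) := by
    intro j _
    by_cases h1 : i = j
    · subst h1
      have : ¬ (i - 1 = i ∧ i ≠ 0) := by omega
      by_cases h0 : i = 0
      · simp [h0]
      · have : i - 1 ≠ i := by omega
        simp [this]
    · by_cases h2 : i + 1 = j
      · subst h2
        have : i - 1 ≠ i + 1 := by omega
        simp [this]
      · by_cases h3 : i - 1 = j
        · have h4 : i ≠ 0 := by omega
          have h5 : i = j + 1 := by omega
          have h6 : ¬ j = i + 1 := by omega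
          simp [h5]
          omega
        · have h4 : ¬ (i = j + 1 ∨ j = i + 1) := by omega
          simp [h1, h2, h3, h4]
  rw [Finset.sum_congr rfl h, Finset.sum_add_distrib, Finset.sum_add_distrib,
    Finset.sum_ite_eq, Finset.sum_ite_eq, Finset.sum_ite_eq]
  have e1 : i ∈ Finset.range (n + 1) := Finset.mem_range.2 hi
  have e2 : i - 1 ∈ Finset.range (n + 1) := Finset.mem_range.2 (by omega)
  simp [e1, e2]

/-- The left Dirichlet solution solves the recurrence; its missing value at site `-1` is `0`. -/
lemma left_rec (w : ℕ → ℝ) (i : ℕ) :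
    w i * tp w 0 i 0 0 + tp w 0 (i + 1) 0 0 + (if i = 0 then 0 else tp w 0 (i - 1) 0 0) = 0 := by
  rw [tp_succ_0, zero_add]
  cases i with
  | zero => simp [tp_zero]
  | succ i => rw [tp_succ_1]; simp; ring

/-- The right Dirichlet solution of the section on the sites `0, …, n`: it is `1` at `n` and
vanishes at `n + 1`. -/
def rsol (w : ℕ → ℝ) (n k : ℕ) : ℝ := if k ≤ n then tp w (k + 1) (n - k) 0 0 else 0

lemma rsol_succ (w : ℕ → ℝ) {n k : ℕ} (hk : k ≤ n) :
    rsol w n (k + 1) = -tp w (k + 1) (n - k) 0 1 := by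
  obtain ⟨d, rfl⟩ := Nat.exists_eq_add_of_le hk
  cases d with
  | zero => simp [rsol, tp_zero]
  | succ d =>
    have h1 : k + 1 ≤ k + (d + 1) := by omega
    have h2 : k + (d + 1) - (k + 1) = d := by omega
    have h3 : k + (d + 1) - k = d + 1 := by omega
    rw [rsol, if_pos h1, h2, h3, tp_succ_01, neg_neg]

lemma rsol_rec (w : ℕ → ℝ) {n k : ℕ} (hk : k + 1 ≤ n) :
    w (k + 1) * rsol w n (k + 1) + rsol w n (k + 2) + rsol w n k = 0 := by
  rw [rsol_succ w hk, rsol, if_pos hk, rsol, if_pos (by omega)]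
  have : n - k = n - (k + 1) + 1 := by omega
  rw [this, tp_succ_00']
  ring

lemma wronskian (w : ℕ → ℝ) {n k : ℕ} (hk : k ≤ n) :
    tp w 0 (k + 1) 0 0 * rsol w n k - tp w 0 k 0 0 * rsol w n (k + 1) = tp w 0 (n + 1) 0 0 := by
  have h : n + 1 = (k + 1) + (n - k) := by omega
  have h2 : tp w 0 (n + 1) 0 0 = tp w (k + 1) (n - k) 0 0 * tp w 0 (k + 1) 0 0
      + tp w (k + 1) (n - k) 0 1 * tp w 0 k 0 0 := by
    rw [h, tp_add, Matrix.mul_apply, Fin.sum_univ_two, zero_add, tp_succ_1]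
  rw [rsol_succ w hk, rsol, if_pos hk, h2]
  ring

/-- Green's function of the section on the sites `0, …, n`: the left Dirichlet solution at the
smaller site times the right one at the larger site, divided by their Wronskian. -/
def green (w : ℕ → ℝ) (n i k : ℕ) : ℝ :=
  -(tp w 0 (min i k) 0 0 * rsol w n (max i k)) / tp w 0 (n + 1) 0 0

lemma green_comm (w : ℕ → ℝ) (n i k : ℕ) : green w n i k = green w n k i := by
  rw [green, green, min_comm, max_comm]

/-- The columns of Green's function are the columns of the inverse of the section. The value at
`n + 1` needs no special treatment because the right Dirichlet solution vanishes there. -/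
lemma green_eq {w : ℕ → ℝ} {n : ℕ} (h0 : tp w 0 (n + 1) 0 0 ≠ 0) {i k : ℕ} (hi : i ≤ n)
    (hk : k ≤ n) :
    w i * green w n i k + (if i < n then green w n (i + 1) k else 0)
      + (if i = 0 then 0 else green w n (i - 1) k) = if i = k then 1 else 0 := by
  have e : (if i < n then green w n (i + 1) k else 0) = green w n (i + 1) k := by
    split_ifs with h
    · rfl
    · have : max (i + 1) k = n + 1 := by omega
      rw [green, this, rsol, if_neg (by omega)]
      simp
  rw [e]
  have key : w i * (tp w 0 (min i k) 0 0 * rsol w n (max i k))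
      + tp w 0 (min (i + 1) k) 0 0 * rsol w n (max (i + 1) k)
      + (if i = 0 then 0 else tp w 0 (min (i - 1) k) 0 0 * rsol w n (max (i - 1) k))
      = if i = k then -tp w 0 (n + 1) 0 0 else 0 := by
    rcases lt_trichotomy i k with h | h | h
    · rw [if_neg h.ne, min_eq_left h.le, max_eq_right h.le, min_eq_left (by omega : i + 1 ≤ k),
        max_eq_right (by omega : i + 1 ≤ k), min_eq_left (by omega : i - 1 ≤ k),
        max_eq_right (by omega : i - 1 ≤ k)]
      have := left_rec w i
      split_ifs at this ⊢
      · linear_combination rsol w n k * this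
      · linear_combination rsol w n k * this
    · subst h
      rw [if_pos rfl, min_self, max_self, min_eq_right (by omega : i ≤ i + 1),
        max_eq_left (by omega : i ≤ i + 1), min_eq_left (by omega : i - 1 ≤ i),
        max_eq_right (by omega : i - 1 ≤ i), ← wronskian w hi]
      have := left_rec w i
      split_ifs at this ⊢
      · linear_combination rsol w n i * this
      · linear_combination rsol w n i * this
    · obtain ⟨j, rfl⟩ : ∃ j, i = j + 1 := ⟨i - 1, by omega⟩
      rw [if_neg h.ne', min_eq_right h.le, max_eq_left h.le,
        min_eq_right (by omega : k ≤ j + 1 + 1), max_eq_left (by omega : k ≤ j + 1 + 1),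
        if_neg (by omega), Nat.add_sub_cancel, min_eq_right (by omega : k ≤ j),
        max_eq_left (by omega : k ≤ j)]
      linear_combination tp w 0 k 0 0 * rsol_rec w hi
  simp only [green]
  split_ifs at key ⊢ <;> field_simp <;> linarith

lemma sum_dist_le {r : ℝ} (h0 : 0 ≤ r) (h1 : r < 1) (i m : ℕ) :
    ∑ k ∈ Finset.range m, r ^ (max i k - min i k) ≤ 2 / (1 - r) := by
  have hgeo : ∀ m, ∑ k ∈ Finset.range m, r ^ k ≤ 1 / (1 - r) := fun m => by
    have := Summable.sum_le_tsum (Finset.range m) (fun k _ => pow_nonneg h0 k)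
      (summable_geometric_of_lt_one h0 h1)
    rwa [tsum_geometric_of_lt_one h0 h1, ← one_div] at this
  have key : ∀ i m, ∑ k ∈ Finset.range m, r ^ (max i k - min i k) ≤
      ∑ k ∈ Finset.range i, r ^ (k + 1) + ∑ k ∈ Finset.range m, r ^ k := by
    intro i
    induction i with
    | zero => intro m; simp
    | succ i ih =>
      intro m
      cases m with
      | zero => simp; exact Finset.sum_nonneg fun k _ => by positivity
      | succ m =>
        rw [Finset.sum_range_succ']
        simp only [Nat.add_max_add_right, Nat.add_min_add_right, Nat.add_sub_add_right]
        rw [Finset.sum_range_succ _ i]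
        have h2 := ih m
        have h3 : ∑ k ∈ Finset.range m, r ^ k ≤ ∑ k ∈ Finset.range (m + 1), r ^ k := by
          rw [Finset.sum_range_succ]
          have := pow_nonneg h0 m
          linarith
        simp only [Nat.max_zero, Nat.min_zero, Nat.sub_zero]
        linarith
  have h2 : ∑ k ∈ Finset.range i, r ^ (k + 1) ≤ ∑ k ∈ Finset.range i, r ^ k :=
    Finset.sum_le_sum fun k _ => pow_le_pow_of_le_one h0 h1.le (Nat.le_succ k)
  calc _ ≤ _ := key i m
    _ ≤ 1 / (1 - r) + 1 / (1 - r) := add_le_add (h2.trans (hgeo i)) (hgeo m)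
    _ = _ := by ring

/-- Schur test: a matrix with symmetric absolute values has `ℓ²` operator norm at most its largest
absolute row sum. -/
lemma schur_test {m : ℕ} (G : Matrix (Fin m) (Fin m) ℂ) {S : ℝ} (hS : 0 ≤ S)
    (hsym : ∀ i j, ‖G i j‖ = ‖G j i‖) (hrow : ∀ i, ∑ j, ‖G i j‖ ≤ S) :
    ‖Matrix.toEuclideanCLM (𝕜 := ℂ) G‖ ≤ S := by
  refine ContinuousLinearMap.opNorm_le_bound _ hS fun x => ?_
  refine abs_le_of_sq_le_sq' ?_ (by positivity) |>.2
  rw [mul_pow, EuclideanSpace.norm_sq_eq, EuclideanSpace.norm_sq_eq]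
  have h1 : ∀ i, ‖(Matrix.toEuclideanCLM (𝕜 := ℂ) G x) i‖ ^ 2 ≤
      S * ∑ j, ‖G i j‖ * ‖x j‖ ^ 2 := by
    intro i
    have e : (Matrix.toEuclideanCLM (𝕜 := ℂ) G x) i = ∑ j, G i j * x j := by
      simp [Matrix.mulVec, dotProduct, Matrix.ofLp_toEuclideanCLM]
    rw [e]
    calc ‖∑ j, G i j * x j‖ ^ 2 ≤ (∑ j, ‖G i j‖ * ‖x j‖) ^ 2 := by
          gcongr
          exact (norm_sum_le _ _).trans_eq (by simp)
      _ ≤ (∑ j, ‖G i j‖) * ∑ j, ‖G i j‖ * ‖x j‖ ^ 2 :=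
          Finset.sum_sq_le_sum_mul_sum_of_sq_le_mul _ (fun _ _ => norm_nonneg _)
            (fun _ _ => by positivity) (fun _ _ => (by ring : _ = _).le)
      _ ≤ _ := by
          gcongr
          exact hrow i
  calc _ ≤ ∑ i, S * ∑ j, ‖G i j‖ * ‖x j‖ ^ 2 := Finset.sum_le_sum fun i _ => h1 i
    _ = S * ∑ j, (∑ i, ‖G j i‖) * ‖x j‖ ^ 2 := by
        rw [← Finset.mul_sum, Finset.sum_comm]
        simp only [Finset.sum_mul, fun i j => hsym j i]
    _ ≤ S * ∑ j, S * ‖x j‖ ^ 2 := by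
        gcongr with j
        exact hrow j
    _ = _ := by rw [← Finset.mul_sum]; ring

lemma stable_of_cond {v : ℤ → ℝ} {K : ℕ} (hK : 1 ≤ K) {w : ℕ → ℝ} (hwv : ∀ n : ℕ, w n = v n)
    (hw : ∀ n, w (n + K) = w n)
    (ht : 2 < |(tp w 0 K).trace|) (hc : checkM (tp w 0 K))
    (hi : ∀ i < K, tp w i K 0 1 ≠ 0 ∨ 1 < |tp w i K 0 0|) : schStablePlus v := by
  obtain ⟨L, l, hs, hp, hL, hl⟩ := exists_eigs ht
  obtain ⟨R, hR, hRK⟩ := exists_root hL hK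
  obtain ⟨C, hC0, hC⟩ := p_upper hK hw hs hp hL hl hR hRK
  obtain ⟨D, hD0, n₀, hD⟩ := p_lower hK hw hs hp hL hl hR hRK hc hi
  have hr1 : R⁻¹ < 1 := inv_lt_one_of_one_lt₀ hR
  have hr0 : 0 < R⁻¹ := by positivity
  have hr2 : 0 < 1 - R⁻¹ := by linarith
  refine ⟨n₀, C ^ 2 * D * (2 / (1 - R⁻¹)), by positivity, fun n hn => ?_⟩
  have hDn := hD (n + 1) (by omega)
  have hpn : 0 < |tp w 0 (n + 1) 0 0| := by
    have : 0 < R ^ (n + 1) := by positivity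
    by_contra h
    have : D * |tp w 0 (n + 1) 0 0| ≤ 0 := mul_nonpos_of_nonneg_of_nonpos hD0.le (not_lt.1 h)
    linarith
  have hpn0 : tp w 0 (n + 1) 0 0 ≠ 0 := abs_pos.1 hpn
  let G : Matrix (Fin (n + 1)) (Fin (n + 1)) ℂ := Matrix.of fun i k => (green w n i k : ℂ)
  have hG : schFinSecPlus v n * G = 1 := by
    ext i k
    have h1 : (schFinSecPlus v n * G) i k =
        (schFinSecPlus v n *ᵥ fun j : Fin (n + 1) => ((green w n j k : ℝ) : ℂ)) i := rfl
    rw [h1, sec_mulVec v n (fun j : ℕ => ((green w n j k : ℝ) : ℂ)), ← hwv]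
    have h2 := green_eq hpn0 (Nat.lt_succ_iff.1 i.2) (Nat.lt_succ_iff.1 k.2)
    rw [Matrix.one_apply]
    simp only [Fin.ext_iff]
    have h3 := congrArg (fun x : ℝ => (x : ℂ)) h2
    beta_reduce at h3
    push_cast [apply_ite Complex.ofReal] at h3
    exact h3
  have hb : ∀ i k : ℕ, i ≤ n → k ≤ n →
      |green w n i k| ≤ C ^ 2 * D * R⁻¹ ^ (max i k - min i k) := by
    intro i k hin hkn
    have hmx : max i k ≤ n := by omega
    rw [green, abs_div, abs_neg, abs_mul, div_le_iff₀ hpn]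
    have e1 := hC 0 (min i k)
    have e2 : |rsol w n (max i k)| ≤ C * R ^ (n - max i k) := by
      rw [rsol, if_pos hmx]; exact hC _ _
    have e3 : R ^ (min i k) * R ^ (n - max i k) ≤ R⁻¹ ^ (max i k - min i k) * R ^ (n + 1) := by
      have : n + 1 = (max i k - min i k) + (min i k + (n - max i k) + 1) := by omega
      rw [this, pow_add R (max i k - min i k), ← mul_assoc, ← mul_pow,
        inv_mul_cancel₀ (by positivity), one_pow, one_mul, ← pow_add]
      exact pow_le_pow_right₀ hR.le (Nat.le_succ _)
    calc _ ≤ (C * R ^ (min i k)) * (C * R ^ (n - max i k)) := by gcongr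
      _ = C ^ 2 * (R ^ (min i k) * R ^ (n - max i k)) := by ring
      _ ≤ C ^ 2 * (R⁻¹ ^ (max i k - min i k) * R ^ (n + 1)) := by gcongr
      _ ≤ C ^ 2 * (R⁻¹ ^ (max i k - min i k) * (D * |tp w 0 (n + 1) 0 0|)) := by gcongr
      _ = _ := by ring
  refine ⟨IsUnit.of_mul_eq_one _ hG, ?_⟩
  rw [Matrix.inv_eq_right_inv hG]
  refine schur_test G (by positivity) (fun i j => ?_) (fun i => ?_)
  · simp only [G, Matrix.of_apply, green_comm w n i j]
  · calc ∑ j, ‖G i j‖ ≤ ∑ j : Fin (n + 1), C ^ 2 * D * R⁻¹ ^ (max (i : ℕ) j - min (i : ℕ) j) := by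
          refine Finset.sum_le_sum fun j _ => ?_
          simp only [G, Matrix.of_apply, Complex.norm_real, Real.norm_eq_abs]
          exact hb _ _ (Nat.lt_succ_iff.1 i.2) (Nat.lt_succ_iff.1 j.2)
      _ = C ^ 2 * D * ∑ j ∈ Finset.range (n + 1), R⁻¹ ^ (max (i : ℕ) j - min (i : ℕ) j) := by
          rw [← Finset.mul_sum, Fin.sum_univ_eq_sum_range
            (fun j : ℕ => R⁻¹ ^ (max (i : ℕ) j - min (i : ℕ) j))]
      _ ≤ _ := by
          gcongr
          exact sum_dist_le hr0.le hr1 _ _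

/-! ### Bijectivity from stability, and necessity of the conditions -/

lemma sec_bound {v : ℤ → ℝ} {n : ℕ} {C : ℝ} (hu : IsUnit (schFinSecPlus v n))
    (hC : ‖Matrix.toEuclideanCLM (𝕜 := ℂ) ((schFinSecPlus v n)⁻¹)‖ ≤ C) (X : ℕ → ℂ) :
    ∑ k ∈ Finset.range (n + 1), ‖X k‖ ^ 2 ≤
      C ^ 2 * ∑ i, ‖(schFinSecPlus v n *ᵥ fun j : Fin (n + 1) => X j) i‖ ^ 2 := by
  set A := schFinSecPlus v n
  set x : Fin (n + 1) → ℂ := fun j => X j with hx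
  have hd := (Matrix.isUnit_iff_isUnit_det _).1 hu
  have h1 : Matrix.toEuclideanCLM (𝕜 := ℂ) A⁻¹ (WithLp.toLp 2 (A *ᵥ x)) = WithLp.toLp 2 x := by
    rw [Matrix.toEuclideanCLM_toLp, Matrix.mulVec_mulVec, Matrix.nonsing_inv_mul _ hd,
      Matrix.one_mulVec]
  have h2 := (Matrix.toEuclideanCLM (𝕜 := ℂ) A⁻¹).le_of_opNorm_le hC (WithLp.toLp 2 (A *ᵥ x))
  rw [h1] at h2
  have h3 := pow_le_pow_left₀ (norm_nonneg _) h2 2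
  rw [mul_pow, EuclideanSpace.norm_sq_eq, EuclideanSpace.norm_sq_eq] at h3
  rw [← Fin.sum_univ_eq_sum_range (fun k => ‖X k‖ ^ 2)]
  exact h3

lemma lp_tendsto (x : lp (fun _ : ℕ => ℂ) 2) : Tendsto (fun n => x n) atTop (𝓝 0) := by
  have h := (lp.memℓp x).summable (by norm_num)
  have h2 := h.tendsto_atTop_zero
  rw [tendsto_zero_iff_norm_tendsto_zero]
  have h3 := h2.sqrt
  simpa using h3

/-- Stability of the finite sections bounds the operator itself from below: the section applied
to the truncation of `x` at `n` differs from the truncation of `Hp x` only by `x (n + 1)` in the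
last coordinate. -/
lemma bddBelow_of_stable {v : ℤ → ℝ} (Hp : lp (fun _ : ℕ => ℂ) 2 →L[ℂ] lp (fun _ : ℕ => ℂ) 2)
    (hH0 : ∀ x : lp (fun _ : ℕ => ℂ) 2, Hp x 0 = x 1 + (v 0 : ℂ) * x 0)
    (hH : ∀ x : lp (fun _ : ℕ => ℂ) 2, ∀ k : ℕ,
      Hp x (k + 1) = x (k + 2) + x k + (v ((k : ℤ) + 1) : ℂ) * x (k + 1))
    (hst : schStablePlus v) : ∃ C : ℝ, 0 < C ∧ ∀ x, ‖x‖ ≤ C * ‖Hp x‖ := by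
  obtain ⟨n₀, C, hC0, hn⟩ := hst
  refine ⟨2 * C, by positivity, fun x => ?_⟩
  have h1 : ∀ n, n₀ ≤ n → ∑ k ∈ Finset.range (n + 1), ‖x k‖ ^ 2 ≤
      C ^ 2 * (2 * ‖Hp x‖ ^ 2 + 2 * ‖x (n + 1)‖ ^ 2) := by
    intro n hnn
    refine (sec_bound (hn n hnn).1 (hn n hnn).2 (fun k => x k)).trans ?_
    gcongr
    have h2 : ∀ i : Fin (n + 1),
        ‖(schFinSecPlus v n *ᵥ fun j : Fin (n + 1) => x j) i‖ ^ 2 ≤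
          2 * ‖Hp x i‖ ^ 2 + if (i : ℕ) = n then 2 * ‖x (n + 1)‖ ^ 2 else 0 := by
      rintro ⟨i, hi⟩
      have h3 : (schFinSecPlus v n *ᵥ fun j : Fin (n + 1) => x j) ⟨i, hi⟩ =
          Hp x i - if i = n then x (n + 1) else 0 := by
        rw [sec_mulVec v n (fun j => x j)]
        cases i with
        | zero =>
          rw [hH0]
          by_cases h : 0 = n
          · subst h; simp
          · have : 0 < n := by omega
            simp [h, this, add_comm]
        | succ i =>
          rw [hH]
          by_cases h : i + 1 = n
          · subst h; simp; ring
          · have : i + 1 < n := by omega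
            simp [h, this]; ring
      rw [h3]
      dsimp only
      have h4 := norm_sub_le (Hp x i) (if i = n then x (n + 1) else 0)
      have h5 := pow_le_pow_left₀ (norm_nonneg _) h4 2
      refine h5.trans ?_
      split_ifs
      · nlinarith [sq_nonneg (‖Hp x i‖ - ‖x (n + 1)‖)]
      · simp; nlinarith [sq_nonneg ‖Hp x i‖]
    refine (Finset.sum_le_sum fun i _ => h2 i).trans ?_
    rw [Finset.sum_add_distrib, Fin.sum_univ_eq_sum_range (fun i : ℕ => 2 * ‖Hp x i‖ ^ 2) (n + 1),
      Fin.sum_univ_eq_sum_range (fun i : ℕ => if i = n then 2 * ‖x (n + 1)‖ ^ 2 else 0) (n + 1),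
      Finset.sum_ite_eq', if_pos (Finset.mem_range.2 (Nat.lt_succ_self n)), ← Finset.mul_sum]
    have h6 := lp.sum_rpow_le_norm_rpow (p := 2) (by norm_num) (Hp x) (Finset.range (n + 1))
    norm_num at h6
    linarith
  refine lp.norm_le_of_forall_sum_le (by norm_num) (by positivity) fun s => ?_
  norm_num
  obtain ⟨N, hN⟩ := s.exists_nat_subset_range
  have h2 : Tendsto (fun n => C ^ 2 * (2 * ‖Hp x‖ ^ 2 + 2 * ‖x (n + 1)‖ ^ 2)) atTop
      (𝓝 (C ^ 2 * (2 * ‖Hp x‖ ^ 2 + 2 * 0 ^ 2))) := by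
    have h3 := ((tendsto_add_atTop_iff_nat 1).2 (tendsto_zero_iff_norm_tendsto_zero.1 (lp_tendsto x)))
    exact ((h3.pow 2).const_mul 2 |>.const_add _).const_mul _
  have h4 : ∑ k ∈ s, ‖x k‖ ^ 2 ≤ C ^ 2 * (2 * ‖Hp x‖ ^ 2 + 2 * 0 ^ 2) := by
    refine ge_of_tendsto h2 ?_
    filter_upwards [eventually_ge_atTop n₀, eventually_ge_atTop N] with n hn1 hn2
    refine le_trans (Finset.sum_le_sum_of_subset_of_nonneg (hN.trans ?_) fun _ _ _ => by positivity)
      (h1 n hn1)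
    exact Finset.range_mono (by omega)
  nlinarith [sq_nonneg (C * ‖Hp x‖)]

/-- A lower bound closes the range of `Hp`, and by symmetry the orthogonal complement of the range
is the trivial kernel. -/
lemma bijective_of_stable {v : ℤ → ℝ}
    (Hp : lp (fun _ : ℕ => ℂ) 2 →L[ℂ] lp (fun _ : ℕ => ℂ) 2)
    (hH0 : ∀ x : lp (fun _ : ℕ => ℂ) 2, Hp x 0 = x 1 + (v 0 : ℂ) * x 0)
    (hH : ∀ x : lp (fun _ : ℕ => ℂ) 2, ∀ k : ℕ,
      Hp x (k + 1) = x (k + 2) + x k + (v ((k : ℤ) + 1) : ℂ) * x (k + 1))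
    (hst : schStablePlus v) : Function.Bijective Hp := by
  obtain ⟨C, hC0, hC⟩ := bddBelow_of_stable Hp hH0 hH hst
  have hanti : AntilipschitzWith ⟨C, hC0.le⟩ Hp :=
    ContinuousLinearMap.antilipschitz_of_bound Hp hC
  refine ⟨hanti.injective, ?_⟩
  have hcl : IsClosed (Set.range Hp) := hanti.isClosed_range Hp.uniformContinuous
  have hker : ∀ z : lp (fun _ : ℕ => ℂ) 2, (∀ x, inner ℂ (Hp x) z = 0) → z = 0 := by
    intro z hz
    -- testing against `Hp (lp.single 2 k 1)` shows that `Hp z = 0`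
    have hH0z : Hp z = 0 := by
      ext k
      have h1 := hz (lp.single 2 k 1)
      cases k with
      | zero =>
        have e : Hp (lp.single 2 0 1) = lp.single 2 1 1 + lp.single 2 0 (v 0 : ℂ) := by
          ext i
          rcases i with _ | _ | i
          · simp [hH0, lp.single_apply]
          · simp [hH, lp.single_apply]
          · simp [hH, lp.single_apply]
        rw [e, inner_add_left, lp.inner_single_left, lp.inner_single_left] at h1
        rw [hH0]
        simpa [mul_comm] using h1
      | succ k =>
        have e : Hp (lp.single 2 (k + 1) 1) = lp.single 2 (k + 2) 1 + lp.single 2 k 1 +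
            lp.single 2 (k + 1) (v ((k : ℤ) + 1) : ℂ) := by
          ext i
          rcases i with _ | i
          · rw [hH0]
            by_cases h : k = 0
            · subst h; simp [lp.single_apply]
            · simp [lp.single_apply, h, Ne.symm h]
          · rw [hH]
            by_cases h : i = k
            · subst h; simp [lp.single_apply]
            · by_cases h2 : i = k + 1
              · subst h2
                have h5 : ¬ k + 1 + 1 = k := by omega
                simp [lp.single_apply, h5]
              · by_cases h3 : i + 1 = k
                · subst h3
                  have h5 : ¬ i = i + 1 + 1 := by omega
                  simp [lp.single_apply, h5]
                · have h4 : ¬ i + 1 = k + 1 := by omega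
                  simp [lp.single_apply, h, h2, h3]
        rw [e, inner_add_left, inner_add_left, lp.inner_single_left, lp.inner_single_left,
          lp.inner_single_left] at h1
        rw [hH]
        simpa [mul_comm] using h1
    have := hC z
    rw [hH0z, norm_zero, mul_zero] at this
    exact norm_le_zero_iff.1 this
  have hcl' : IsClosed ((LinearMap.range Hp.toLinearMap :
      Submodule ℂ (lp (fun _ : ℕ => ℂ) 2)) : Set (lp (fun _ : ℕ => ℂ) 2)) := by
    exact hcl
  have := hcl'.completeSpace_coe
  have hbot : (LinearMap.range Hp.toLinearMap)ᗮ = ⊥ := by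
    rw [Submodule.eq_bot_iff]
    intro z hz
    rw [Submodule.mem_orthogonal] at hz
    exact hker z fun x => hz _ ⟨x, rfl⟩
  rw [Submodule.orthogonal_eq_bot_iff] at hbot
  exact LinearMap.range_eq_top.1 hbot

/-- For `|t| ≤ 2` the conserved quadratic form `a² - t a b + b²` dominates `(|a| - |b|)²`, so a
null solution of the recurrence has constant absolute value. -/
lemma rec_zero {z : ℕ → ℝ} {t : ℝ} (hz : ∀ m, z (m + 2) = t * z (m + 1) - z m)
    (ht : |t| ≤ 2) (h0 : Tendsto z atTop (𝓝 0)) : z 0 = 0 := by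
  have hQ : ∀ m, z (m + 1) ^ 2 - t * z m * z (m + 1) + z m ^ 2 =
      z 1 ^ 2 - t * z 0 * z 1 + z 0 ^ 2 := by
    intro m
    induction m with
    | zero => rfl
    | succ m ih => rw [← ih, hz]; ring
  have h1 : Tendsto (fun m => z (m + 1)) atTop (𝓝 0) := (tendsto_add_atTop_iff_nat 1).2 h0
  have h2 : Tendsto (fun m => z (m + 1) ^ 2 - t * z m * z (m + 1) + z m ^ 2) atTop
      (𝓝 (0 ^ 2 - t * 0 * 0 + 0 ^ 2)) :=
    ((h1.pow 2).sub ((h0.const_mul t).mul h1)).add (h0.pow 2)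
  simp only [hQ] at h2
  have h3 := tendsto_nhds_unique h2 tendsto_const_nhds
  have h4 : ∀ m, |z (m + 1)| = |z m| := by
    intro m
    have h5 := hQ m
    rw [← h3] at h5
    have h6 : t * z m * z (m + 1) ≤ 2 * |z m| * |z (m + 1)| := by
      refine (le_abs_self _).trans ?_
      rw [abs_mul, abs_mul]
      gcongr
    have h7 : (|z (m + 1)| - |z m|) ^ 2 ≤ 0 := by
      nlinarith [sq_abs (z m), sq_abs (z (m + 1))]
    have h8 := pow_eq_zero_iff (two_ne_zero) |>.1 (le_antisymm h7 (sq_nonneg _))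
    linarith
  have h5 : ∀ m, |z m| = |z 0| := by
    intro m
    induction m with
    | zero => rfl
    | succ m ih => rw [h4, ih]
  have h6 := h0.abs
  simp only [h5, abs_zero] at h6
  exact abs_eq_zero.1 (tendsto_nhds_unique h6 tendsto_const_nhds).symm

/-- Solving `Hp x = e₀` yields a decaying solution of the recurrence whose value at site `-1` is
`-1`; its values just before the full periods decay. -/
lemma cond_of_surj {v : ℤ → ℝ} {K : ℕ} (hK : 1 ≤ K) {w : ℕ → ℝ} (hwv : ∀ n : ℕ, w n = v n)
    (hw : ∀ n, w (n + K) = w n)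
    (Hp : lp (fun _ : ℕ => ℂ) 2 →L[ℂ] lp (fun _ : ℕ => ℂ) 2)
    (hH0 : ∀ x : lp (fun _ : ℕ => ℂ) 2, Hp x 0 = x 1 + (v 0 : ℂ) * x 0)
    (hH : ∀ x : lp (fun _ : ℕ => ℂ) 2, ∀ k : ℕ,
      Hp x (k + 1) = x (k + 2) + x k + (v ((k : ℤ) + 1) : ℂ) * x (k + 1))
    (hs : Function.Surjective Hp) : 2 < |(tp w 0 K).trace| ∧ checkM (tp w 0 K) := by
  obtain ⟨x, hx⟩ := hs (lp.single 2 0 1)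
  obtain ⟨u, hu⟩ : ∃ u : ℕ → ℝ, u = fun k => (x k).re := ⟨_, rfl⟩
  have hut : Tendsto u atTop (𝓝 0) := by
    have := (Complex.continuous_re.tendsto 0).comp (lp_tendsto x)
    rw [hu]; exact this
  have hu0 : u 1 + w 0 * u 0 = 1 := by
    have h1 := hH0 x
    rw [hx] at h1
    have h2 := congrArg Complex.re h1
    simp [lp.single_apply] at h2
    rw [hu, hwv]; simpa using h2.symm
  have hur : ∀ k, u (k + 2) + u k + w (k + 1) * u (k + 1) = 0 := by
    intro k
    have h1 := hH x k
    rw [hx] at h1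
    have h2 := congrArg Complex.re h1
    simp [lp.single_apply] at h2
    rw [hu, hwv]; simpa using h2.symm
  have hsol : ∀ k, tp w 0 k 0 0 * u 0 - tp w 0 k 0 1 = u k ∧
      tp w 0 (k + 1) 0 0 * u 0 - tp w 0 (k + 1) 0 1 = u (k + 1) := by
    intro k
    induction k with
    | zero =>
      refine ⟨by simp [tp_zero], ?_⟩
      rw [tp_succ_0, tp_succ_0]
      simp [tp_zero]
      linarith
    | succ k ih =>
      refine ⟨ih.2, ?_⟩
      rw [tp_succ_0 w 0 (k + 1), tp_succ_0 w 0 (k + 1), tp_succ_1, tp_succ_1, zero_add]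
      linear_combination (-w (k + 1)) * ih.2 - ih.1 - hur k
  obtain ⟨z, hz⟩ : ∃ z : ℕ → ℝ, z = fun m => tp w 0 (m * K) 1 0 * u 0 - tp w 0 (m * K) 1 1 :=
    ⟨_, rfl⟩
  have hz0 : z 0 = -1 := by simp [hz, tp_zero]
  have hzt : Tendsto z atTop (𝓝 0) := by
    have h1 : Tendsto (fun m : ℕ => (m + 1) * K - 1) atTop atTop := by
      refine tendsto_atTop_mono (fun m => ?_) tendsto_id
      have : (m + 1) * 1 ≤ (m + 1) * K := Nat.mul_le_mul_left _ hK
      simp only [id]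
      omega
    have h2 := hut.comp h1
    rw [← tendsto_add_atTop_iff_nat 1]
    refine h2.congr fun m => ?_
    have h3 : (m + 1) * K = ((m + 1) * K - 1) + 1 := by
      have : (m + 1) * 1 ≤ (m + 1) * K := Nat.mul_le_mul_left _ hK
      omega
    rw [hz]
    beta_reduce
    rw [h3, tp_succ_1, tp_succ_1, (hsol _).1]
    rfl
  constructor
  · by_contra hcon
    have := rec_zero (z := z) (t := (tp w 0 K).trace) (fun m => by
      have e0 := p_rec hw 0 0 m 1 0
      have e1 := p_rec hw 0 0 m 1 1
      simp only [add_zero] at e0 e1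
      rw [hz]; beta_reduce
      rw [e0, e1]; ring) (not_lt.1 hcon) hzt
    rw [hz0] at this
    norm_num at this
  · by_contra hcon
    obtain ⟨h10, h00⟩ := not_or.1 hcon
    rw [not_not] at h10
    have hdet := tp_det w 0 K
    have hzs : ∀ m, z (m + 1) = tp w 0 K 1 1 * z m := by
      intro m
      rw [hz]; beta_reduce
      rw [tp_pow hw, tp_pow hw, pow_succ', Matrix.mul_apply, Matrix.mul_apply,
        Fin.sum_univ_two, Fin.sum_univ_two, h10]
      ring
    rw [Matrix.det_fin_two, h10, mul_zero, sub_zero] at hdet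
    have h11 : 1 ≤ |tp w 0 K 1 1| := by
      have h1 : |tp w 0 K 0 0| * |tp w 0 K 1 1| = 1 := by rw [← abs_mul, hdet, abs_one]
      nlinarith [abs_nonneg (tp w 0 K 1 1), not_lt.1 h00]
    have hzb : ∀ m, 1 ≤ |z m| := by
      intro m
      induction m with
      | zero => simp [hz0]
      | succ m ih =>
        rw [hzs, abs_mul]
        exact one_le_mul_of_one_le_of_one_le h11 ih
    have := ge_of_tendsto' hzt.abs hzb
    norm_num at this

/-- Applying the section on `0, …, n` to the left Dirichlet solution `p` gives `-p (n + 1)` in the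
last coordinate and zero elsewhere, so stability bounds the partial `ℓ²` norms of `p` by its next
value. -/
lemma p_sum_le {v : ℤ → ℝ} {w : ℕ → ℝ} (hwv : ∀ n : ℕ, w n = v n) {n : ℕ} {C : ℝ}
    (hu : IsUnit (schFinSecPlus v n))
    (hC : ‖Matrix.toEuclideanCLM (𝕜 := ℂ) ((schFinSecPlus v n)⁻¹)‖ ≤ C) :
    ∑ k ∈ Finset.range (n + 1), tp w 0 k 0 0 ^ 2 ≤ C ^ 2 * tp w 0 (n + 1) 0 0 ^ 2 := by
  have h := sec_bound hu hC (fun k => ((tp w 0 k 0 0 : ℝ) : ℂ))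
  have h1 : ∀ i : Fin (n + 1), ‖(schFinSecPlus v n *ᵥ
      fun j : Fin (n + 1) => ((tp w 0 j 0 0 : ℝ) : ℂ)) i‖ ^ 2 =
      if (i : ℕ) = n then tp w 0 (n + 1) 0 0 ^ 2 else 0 := by
    rintro ⟨i, hi⟩
    rw [sec_mulVec v n (fun k => ((tp w 0 k 0 0 : ℝ) : ℂ)), ← hwv]
    dsimp only
    have h2 := left_rec w i
    have h3 : ((w i : ℝ) : ℂ) * ((tp w 0 i 0 0 : ℝ) : ℂ) +
        (if i < n then ((tp w 0 (i + 1) 0 0 : ℝ) : ℂ) else 0) +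
        (if i = 0 then 0 else ((tp w 0 (i - 1) 0 0 : ℝ) : ℂ)) =
        ((if i = n then -tp w 0 (n + 1) 0 0 else 0 : ℝ) : ℂ) := by
      have h4 := congrArg (fun x : ℝ => (x : ℂ)) h2
      beta_reduce at h4
      push_cast [apply_ite Complex.ofReal] at h4
      by_cases hin : i = n
      · subst hin
        rw [if_neg (lt_irrefl _), if_pos rfl]
        push_cast
        linear_combination h4
      · rw [if_pos (by omega), if_neg hin]
        push_cast
        linear_combination h4
    rw [h3, Complex.norm_real, Real.norm_eq_abs, sq_abs]
    split_ifs <;> ring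
  rw [Finset.sum_congr rfl fun i _ => h1 i,
    Fin.sum_univ_eq_sum_range (fun i : ℕ => if i = n then tp w 0 (n + 1) 0 0 ^ 2 else 0) (n + 1),
    Finset.sum_ite_eq', if_pos (Finset.mem_range.2 (Nat.lt_succ_self n))] at h
  simpa using h

/-- The failure of the condition makes the left Dirichlet solution non-increasing along one
residue class, so that its partial `ℓ²` norms cannot be bounded by its next value. -/
lemma cond_of_stable {v : ℤ → ℝ} {K : ℕ} (hK : 1 ≤ K) {w : ℕ → ℝ} (hwv : ∀ n : ℕ, w n = v n)
    (hw : ∀ n, w (n + K) = w n) (hst : schStablePlus v) (j : ℕ) :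
    tp w j K 0 1 ≠ 0 ∨ 1 < |tp w j K 0 0| := by
  by_contra hcon
  obtain ⟨h01, h00⟩ := not_or.1 hcon
  rw [not_not] at h01
  rw [not_lt] at h00
  obtain ⟨n₀, C, hC0, hn⟩ := hst
  set μ := tp w j K 0 0
  set q := tp w 0 j 0 0
  -- along the class `j` modulo `K` the left Dirichlet solution is the geometric sequence `μ ^ m * q`
  have hp : ∀ m, tp w 0 (m * K + j) 0 0 = μ ^ m * q := by
    intro m
    induction m with
    | zero => simp [q]
    | succ m ih =>
      have e : (m + 1) * K + j = (m * K + j) + K := by ring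
      have e2 : 0 + (m * K + j) = j + m * K := by ring
      rw [e, tp_add, e2, tp_per_mul hw, Matrix.mul_apply, Fin.sum_univ_two, ih, h01, pow_succ]
      ring
  obtain ⟨N, hN⟩ := exists_nat_gt (C ^ 2)
  obtain ⟨N', hN'⟩ : ∃ N', N' = N + n₀ + 1 := ⟨_, rfl⟩
  have hle : N' * 1 ≤ N' * K := Nat.mul_le_mul_left _ hK
  obtain ⟨n, hnn⟩ : ∃ n, n + 1 = N' * K + j := ⟨N' * K + j - 1, by omega⟩
  have hmn := hn n (by omega)
  have h1 := p_sum_le (w := w) hwv hmn.1 hmn.2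
  rw [hnn, hp] at h1
  have h2 : ∑ m ∈ Finset.range N', (μ ^ m * q) ^ 2 ≤
      ∑ k ∈ Finset.range (N' * K + j), tp w 0 k 0 0 ^ 2 := by
    have hinj : Set.InjOn (fun m => m * K + j) (Finset.range N' : Set ℕ) := by
      intro a _ b _ hab
      have : a * K = b * K := by simpa using hab
      exact Nat.eq_of_mul_eq_mul_right hK this
    have h3 : ∑ m ∈ Finset.range N', (μ ^ m * q) ^ 2 =
        ∑ k ∈ (Finset.range N').image (fun m => m * K + j), tp w 0 k 0 0 ^ 2 := by
      rw [Finset.sum_image hinj]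
      exact Finset.sum_congr rfl fun m _ => by rw [hp]
    rw [h3]
    refine Finset.sum_le_sum_of_subset_of_nonneg ?_ fun _ _ _ => sq_nonneg _
    intro k hk
    obtain ⟨m, hm, rfl⟩ := Finset.mem_image.1 hk
    have := Nat.mul_lt_mul_of_pos_right (Finset.mem_range.1 hm) hK
    exact Finset.mem_range.2 (by omega)
  have h3 : (N' : ℝ) * (μ ^ N' * q) ^ 2 ≤ ∑ m ∈ Finset.range N', (μ ^ m * q) ^ 2 := by
    have : ∀ m ∈ Finset.range N', (μ ^ N' * q) ^ 2 ≤ (μ ^ m * q) ^ 2 := by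
      intro m hm
      rw [sq_le_sq, abs_mul, abs_mul, abs_pow, abs_pow]
      gcongr ?_ * _
      exact pow_le_pow_of_le_one (abs_nonneg _) h00 (Finset.mem_range.1 hm).le
    have := Finset.card_nsmul_le_sum _ _ _ this
    simpa using this
  have hCN : C ^ 2 < N' := by rw [hN']; push_cast; linarith [(Nat.cast_nonneg n₀ : (0 : ℝ) ≤ n₀)]
  have h4 : (μ ^ N' * q) ^ 2 = 0 := by
    have := sq_nonneg (μ ^ N' * q)
    by_contra hne
    have h5 : 0 < (μ ^ N' * q) ^ 2 := lt_of_le_of_ne this (Ne.symm hne)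
    nlinarith
  -- the initial value `p 0 = 1` contributes to the sum, so `p (n + 1) = 0` is impossible
  rw [h4, mul_zero, ← hnn] at h1
  have h5 := Finset.single_le_sum (f := fun k => tp w 0 k 0 0 ^ 2) (fun k _ => sq_nonneg _)
    (Finset.mem_range.2 (Nat.succ_pos n))
  simp [tp_zero] at h5
  linarith

end

/-- characterisation of the applicability of the finite section method
for a one-sided `K`-periodic discrete Schrödinger operator. -/
theorem stmt5 (K : ℕ) (hK : 1 ≤ K) (v : ℤ → ℝ)
    (hper : ∀ n : ℤ, v (n + (K : ℤ)) = v n)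
    (Hp : lp (fun _ : ℕ => ℂ) 2 →L[ℂ] lp (fun _ : ℕ => ℂ) 2)
    (hH0 : ∀ x : lp (fun _ : ℕ => ℂ) 2, Hp x 0 = x 1 + (v 0 : ℂ) * x 0)
    (hH : ∀ x : lp (fun _ : ℕ => ℂ) 2, ∀ k : ℕ,
      Hp x (k + 1) = x (k + 2) + x k + (v ((k : ℤ) + 1) : ℂ) * x (k + 1)) :
    (Function.Bijective Hp ∧ schStablePlus v) ↔
      (2 < |Matrix.trace (monodromy v K 0)| ∧
        checkM (monodromy v K 0) ∧
        ∀ j : ℕ, j < K → checkM (monodromyRev v K (j : ℤ))) := by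
  obtain ⟨w, hw⟩ : ∃ w : ℕ → ℝ, w = fun n : ℕ => v n := ⟨_, rfl⟩
  have hwv : ∀ n : ℕ, w n = v n := fun n => by rw [hw]
  have hwp : ∀ n, w (n + K) = w n := fun n => by rw [hwv, hwv, Nat.cast_add, hper]
  have hM : monodromy v K 0 = tp w 0 K := by
    have := monodromy_eq v K 0
    rw [hw]; exact_mod_cast this
  have hR : ∀ j : ℕ, checkM (monodromyRev v K (j : ℤ)) ↔
      (tp w j K 0 1 ≠ 0 ∨ 1 < |tp w j K 0 0|) := fun j => by rw [checkM_rev, hw]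
  simp only [hM, hR]
  constructor
  · rintro ⟨hb, hst⟩
    obtain ⟨h1, h2⟩ := cond_of_surj hK hwv hwp Hp hH0 hH hb.2
    exact ⟨h1, h2, fun j _ => cond_of_stable hK hwv hwp hst j⟩
  · rintro ⟨h1, h2, h3⟩
    have hst := stable_of_cond hK hwv hwp h1 h2 h3
    exact ⟨bijective_of_stable Hp hH0 hH hst, hst⟩
end
end

section
/- Let K ≥ 1 and let v : ℤ → ℝ be a K-periodic real potential. If the finite section method is applicable to the two-sided discrete Schrödinger operator H on ℓ²(ℤ) (i.e. H is bijective and the two-sided finite sections (Hₙ) are stable), then the finite section method is applicable to the one-sided operator H₊ on ℓ²(ℕ) (i.e. H₊ is bijective and the one-sided finite sections are stable). -/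
/-!
Stability of the two-sided sections is a uniform lower bound `‖f‖ ≤ C ‖H f‖` on the intervals
`[-N, N]`, for all large `N` (`secLB_iff_inv`). By periodicity these intervals may be
translated by multiples of the period, so the same bound holds on
arbitrarily long intervals starting at `0` (`left_bound`) and on intervals ending at any
given `n` and starting at or left of `0` (`right_bound`).

The first family shows that `H₊` is bounded below on finitely supported sequences, hence on `ℓ²(ℕ)`;
being symmetric, it is bijective (`halfLine_bound`, `halfLine_bijective`).

For the section to `[0, n]`, split a vector by the two linear cutoffs `1 - k / n` and `k / n`. One
piece vanishes at `n` and is controlled by an interval starting at `0`, the other vanishes at `0` and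
is controlled by an interval ending at `n`. The cutoffs commute with the operator up to `O(1 / n)`,
and this error is absorbed for large `n`, giving the lower bound with constant `4 C`
(`commutator_bound`, `section_bound`).
-/

noncomputable section

open Matrix

/-- The `n`-th (two-sided) finite section of the discrete Schrödinger operator with
potential `v`. -/
def schFinSec (v : ℤ → ℝ) (n : ℕ) : Matrix (Fin (2 * n + 1)) (Fin (2 * n + 1)) ℂ :=
  Matrix.of fun i j =>
    if (i : ℤ) = (j : ℤ) then ((v ((i : ℤ) - (n : ℤ))) : ℂ)
    else if (i : ℤ) = (j : ℤ) + 1 ∨ (j : ℤ) = (i : ℤ) + 1 then 1 else 0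

/-- Stability of the sequence of two-sided finite sections. -/
def schStable (v : ℤ → ℝ) : Prop :=
  ∃ n₀ : ℕ, ∃ C : ℝ, 0 < C ∧ ∀ n : ℕ, n₀ ≤ n →
    IsUnit (schFinSec v n) ∧
    ‖Matrix.toEuclideanCLM (𝕜 := ℂ) ((schFinSec v n)⁻¹)‖ ≤ C

/-! ### Sections of the difference expression and their lower bounds -/

/-- The Schrödinger difference expression `f (k + 1) + f (k - 1) + v k * f k`, on arbitrary functions
on `ℤ`. -/
def schL (v : ℤ → ℝ) (f : ℤ → ℂ) (k : ℤ) : ℂ := f (k + 1) + f (k - 1) + (v k : ℂ) * f k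

/-- The section of the operator to the interval `[a, b]` is bounded below by `1 / C`. Vectors on `[a, b]`
are encoded as functions on `ℤ` vanishing off `[a, b]`; rows outside `[a, b]` do not enter the
right-hand side. -/
def SecLB (v : ℤ → ℝ) (a b : ℤ) (C : ℝ) : Prop :=
  ∀ f : ℤ → ℂ, (∀ k, k ∉ Finset.Icc a b → f k = 0) →
    ∑ k ∈ Finset.Icc a b, ‖f k‖ ^ 2 ≤ C ^ 2 * ∑ k ∈ Finset.Icc a b, ‖schL v f k‖ ^ 2

lemma sum_fin_eq_Icc {M : Type*} [AddCommMonoid M] (m : ℕ) (F : ℤ → M) :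
    ∑ i : Fin (m + 1), F (i : ℤ) = ∑ k ∈ Finset.Icc (0 : ℤ) m, F k := by
  rw [Fin.sum_univ_eq_sum_range (fun i : ℕ => F (i : ℤ)) (m + 1)]
  refine Finset.sum_bij (fun i _ => (i : ℤ)) ?_ ?_ ?_ ?_
  · intro i hi; simp at hi ⊢; omega
  · intro i _ j _ h; exact_mod_cast h
  · intro k hk
    simp at hk
    exact ⟨k.toNat, by simp; omega, by simp [hk.1]⟩
  · intros; rfl

lemma schFinSecPlus_mulVec (w : ℤ → ℝ) (m : ℕ) (f : ℤ → ℂ)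
    (hf : ∀ k, k ∉ Finset.Icc (0 : ℤ) m → f k = 0) (i : Fin (m + 1)) :
    (schFinSecPlus w m *ᵥ fun j => f (j : ℤ)) i = schL w f (i : ℤ) := by
  let G : ℤ → ℂ := fun k => (if k = (i : ℤ) + 1 then f k else 0) +
    (if k = (i : ℤ) - 1 then f k else 0) + (if k = (i : ℤ) then (w k : ℂ) * f k else 0)
  have h1 : (schFinSecPlus w m *ᵥ fun j => f (j : ℤ)) i = ∑ j : Fin (m + 1), G (j : ℤ) := by
    simp only [Matrix.mulVec, dotProduct, schFinSecPlus, Matrix.of_apply, G]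
    refine Finset.sum_congr rfl fun j _ => ?_
    split_ifs <;> first | omega | simp_all
  have key : ∀ (l : ℤ) (G : ℤ → ℂ), (∀ k, k ∉ Finset.Icc (0 : ℤ) m → G k = 0) →
      ∑ k ∈ Finset.Icc (0 : ℤ) m, (if k = l then G k else 0) = G l := by
    intro l G hG
    rw [Finset.sum_ite_eq']
    split_ifs with h
    · rfl
    · exact (hG l h).symm
  rw [h1, sum_fin_eq_Icc m G, Finset.sum_add_distrib, Finset.sum_add_distrib, key _ f hf, key _ f hf,
    key _ (fun k => (w k : ℂ) * f k) (fun k hk => by simp [hf k hk])]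
  rfl

lemma secLB_iff_euclidean (w : ℤ → ℝ) (m : ℕ) {C : ℝ} (hC : 0 < C) :
    SecLB w 0 m C ↔ ∀ x : EuclideanSpace ℂ (Fin (m + 1)),
      ‖x‖ ≤ C * ‖Matrix.toEuclideanCLM (𝕜 := ℂ) (schFinSecPlus w m) x‖ := by
  have key : ∀ (x : EuclideanSpace ℂ (Fin (m + 1))) (f : ℤ → ℂ),
      (∀ k, k ∉ Finset.Icc (0 : ℤ) m → f k = 0) → (∀ i : Fin (m + 1), x i = f (i : ℤ)) →
      (‖x‖ ≤ C * ‖Matrix.toEuclideanCLM (𝕜 := ℂ) (schFinSecPlus w m) x‖ ↔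
      ∑ k ∈ Finset.Icc (0 : ℤ) m, ‖f k‖ ^ 2 ≤
        C ^ 2 * ∑ k ∈ Finset.Icc (0 : ℤ) m, ‖schL w f k‖ ^ 2) := by
    intro x f hf hx
    have hx' : x.ofLp = fun j : Fin (m + 1) => f (j : ℤ) := funext hx
    rw [← abs_of_nonneg (norm_nonneg x), ← abs_of_nonneg
      (show 0 ≤ C * ‖Matrix.toEuclideanCLM (𝕜 := ℂ) (schFinSecPlus w m) x‖ by positivity),
      ← sq_le_sq, mul_pow, EuclideanSpace.norm_sq_eq, EuclideanSpace.norm_sq_eq,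
      ← sum_fin_eq_Icc m (fun k => ‖f k‖ ^ 2), ← sum_fin_eq_Icc m (fun k => ‖schL w f k‖ ^ 2)]
    simp only [Matrix.ofLp_toEuclideanCLM, hx', schFinSecPlus_mulVec w m f hf]
  constructor
  · intro h x
    let f : ℤ → ℂ := fun k => if hk : 0 ≤ k ∧ k ≤ m then x ⟨k.toNat, by omega⟩ else 0
    have hf : ∀ k, k ∉ Finset.Icc (0 : ℤ) m → f k = 0 := by
      intro k hk
      exact dif_neg (by simpa using hk)
    refine (key x f hf ?_).2 (h f hf)
    intro i
    have : (0 : ℤ) ≤ i ∧ (i : ℤ) ≤ m := by omega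
    simp [f, this]
  · intro h f hf
    exact (key (WithLp.toLp 2 fun i => f (i : ℤ)) f hf fun i => rfl).1 (h _)

/-- For a square matrix a lower bound is the same as invertibility with a bound on the inverse, so
`SecLB` is the quantity that the stability of finite sections controls. -/
lemma secLB_iff_inv (w : ℤ → ℝ) (m : ℕ) {C : ℝ} (hC : 0 < C) :
    SecLB w 0 m C ↔ IsUnit (schFinSecPlus w m) ∧
      ‖Matrix.toEuclideanCLM (𝕜 := ℂ) ((schFinSecPlus w m)⁻¹)‖ ≤ C := by
  rw [secLB_iff_euclidean w m hC]
  set A := schFinSecPlus w m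
  constructor
  · intro h
    have hu : IsUnit A := by
      rw [← Matrix.mulVec_injective_iff_isUnit]
      intro x y hxy
      have h0 := h (WithLp.toLp 2 (x - y))
      have : Matrix.toEuclideanCLM (𝕜 := ℂ) A (WithLp.toLp 2 (x - y)) = 0 := by
        ext i
        simp [show A *ᵥ x = A *ᵥ y from hxy]
      rw [this, norm_zero, mul_zero] at h0
      have h1 := norm_le_zero_iff.1 h0
      exact sub_eq_zero.1 (congrArg WithLp.ofLp h1)
    refine ⟨hu, ContinuousLinearMap.opNorm_le_bound _ hC.le fun y => ?_⟩
    have h1 := h (Matrix.toEuclideanCLM (𝕜 := ℂ) A⁻¹ y)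
    rwa [← mul_apply_eq_comp, ← map_mul,
      Matrix.mul_nonsing_inv _ ((Matrix.isUnit_iff_isUnit_det _).1 hu), map_one,
      one_apply_eq_self] at h1
  · rintro ⟨hu, hn⟩ x
    have h1 := (Matrix.toEuclideanCLM (𝕜 := ℂ) A⁻¹).le_of_opNorm_le hn
      (Matrix.toEuclideanCLM (𝕜 := ℂ) A x)
    rwa [← mul_apply_eq_comp, ← map_mul,
      Matrix.nonsing_inv_mul _ ((Matrix.isUnit_iff_isUnit_det _).1 hu), map_one,
      one_apply_eq_self] at h1

lemma schFinSec_eq (v : ℤ → ℝ) (n : ℕ) :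
    schFinSec v n = schFinSecPlus (fun k => v (k + -(n : ℤ))) (2 * n) := by
  ext i j
  simp only [schFinSec, schFinSecPlus, Matrix.of_apply, ← sub_eq_add_neg]
  split_ifs <;> first | omega | rfl

/-! ### Translation and restriction of intervals -/

lemma sum_Icc_shift (a b t : ℤ) (F : ℤ → ℝ) :
    ∑ k ∈ Finset.Icc (a + t) (b + t), F k = ∑ k ∈ Finset.Icc a b, F (k + t) := by
  rw [← Finset.map_add_right_Icc, Finset.sum_map]
  rfl

lemma SecLB.shift {v : ℤ → ℝ} {a b C} (t : ℤ) (h : SecLB (fun k => v (k + t)) a b C) :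
    SecLB v (a + t) (b + t) C := by
  intro f hf
  have h1 := h (fun k => f (k + t)) (fun k hk => hf _ (by simpa using hk))
  rw [sum_Icc_shift, sum_Icc_shift]
  refine h1.trans_eq ?_
  congr 1
  refine Finset.sum_congr rfl fun k _ => ?_
  simp only [schL]
  rw [add_right_comm k 1 t, sub_add_eq_add_sub k 1 t]

/-- A vector living on a smaller interval inherits the lower bound of the larger section, provided
the operator does not push it out of the smaller interval; in practice this means that `f` vanishes
at each end of `[c, d]` that is not also an end of `[a, b]`. -/
lemma SecLB.restrict {v : ℤ → ℝ} {a b C} (h : SecLB v a b C) {c d : ℤ} (hac : a ≤ c) (hdb : d ≤ b)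
    (f : ℤ → ℂ) (hf : ∀ k, k ∉ Finset.Icc c d → f k = 0)
    (hL : ∀ k ∈ Finset.Icc a b, k ∉ Finset.Icc c d → schL v f k = 0) :
    ∑ k ∈ Finset.Icc c d, ‖f k‖ ^ 2 ≤ C ^ 2 * ∑ k ∈ Finset.Icc c d, ‖schL v f k‖ ^ 2 := by
  have hs : Finset.Icc c d ⊆ Finset.Icc a b := Finset.Icc_subset_Icc hac hdb
  rw [Finset.sum_subset hs fun k _ hk => by simp [hf k hk],
    Finset.sum_subset hs fun k hk hk' => by simp [hL k hk hk']]
  exact h f fun k hk => hf k fun hk' => hk (hs hk')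

lemma periodic_mul {K : ℕ} {v : ℤ → ℝ} (hper : ∀ n : ℤ, v (n + (K : ℤ)) = v n) (t : ℤ) :
    (fun k => v (k + K * t)) = v := by
  have : Function.Periodic v (K : ℤ) := hper
  funext k
  rw [mul_comm]
  simpa using this.int_mul t k

/-- Translating the section to `[-N, N]` by `N`, a multiple of the period, gives arbitrarily long
intervals with left end `0` and one common bound: the half-line operator on `[0, ∞)` is bounded
below. -/
lemma left_bound {K : ℕ} (hK : 1 ≤ K) {v : ℤ → ℝ} (hper : ∀ n : ℤ, v (n + (K : ℤ)) = v n)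
    {n₀ : ℕ} {C : ℝ} (h : ∀ n : ℕ, n₀ ≤ n → SecLB v (-n) n C) (n : ℕ) :
    ∃ b : ℤ, n ≤ b ∧ SecLB v 0 b C := by
  set N := K * (n₀ + n)
  have hN : n₀ + n ≤ N := Nat.le_mul_of_pos_left _ hK
  have h1 := h N (by omega)
  rw [← periodic_mul hper (n₀ + n : ℕ)] at h1
  have h2 := h1.shift
  refine ⟨2 * N, by omega, ?_⟩
  convert h2 using 1 <;> (simp only [N]; push_cast; ring)

/-- The mirror image of `left_bound`: choosing `N` congruent to `n` modulo the period and translating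
`[-N, N]` by `n - N` gives an interval ending at `n`. -/
lemma right_bound {K : ℕ} (hK : 1 ≤ K) {v : ℤ → ℝ} (hper : ∀ n : ℤ, v (n + (K : ℤ)) = v n)
    {n₀ : ℕ} {C : ℝ} (h : ∀ n : ℕ, n₀ ≤ n → SecLB v (-n) n C) (n : ℕ) :
    ∃ a : ℤ, a ≤ 0 ∧ SecLB v a n C := by
  set N := n + K * n₀
  have hN : n₀ ≤ K * n₀ := Nat.le_mul_of_pos_left _ hK
  have h1 := h N (by omega)
  rw [← periodic_mul hper (-(n₀ : ℤ))] at h1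
  have h2 := h1.shift
  refine ⟨-N + K * -(n₀ : ℤ), by push_cast [N]; nlinarith, ?_⟩
  convert h2 using 1
  simp only [N]; push_cast; ring

/-! ### Gluing by cutoffs -/

lemma norm_sq_add_le (x y : ℂ) : ‖x + y‖ ^ 2 ≤ 2 * ‖x‖ ^ 2 + 2 * ‖y‖ ^ 2 := by
  have := norm_add_le x y
  nlinarith [sq_nonneg (‖x‖ - ‖y‖), norm_nonneg (x + y), norm_nonneg x, norm_nonneg y]

lemma sum_shift_le (n : ℕ) (f : ℤ → ℂ) (hf : ∀ k, k ∉ Finset.Icc (0 : ℤ) n → f k = 0) (t : ℤ) :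
    ∑ k ∈ Finset.Icc (0 : ℤ) n, ‖f (k + t)‖ ^ 2 ≤ ∑ k ∈ Finset.Icc (0 : ℤ) n, ‖f k‖ ^ 2 := by
  rw [← sum_Icc_shift 0 n t fun k => ‖f k‖ ^ 2]
  rw [← Finset.sum_inter_add_sum_sdiff _ (Finset.Icc (0 : ℤ) n) fun k => ‖f k‖ ^ 2,
    Finset.sum_eq_zero (s := _ \ _), add_zero]
  · exact Finset.sum_le_sum_of_subset_of_nonneg Finset.inter_subset_right fun _ _ _ => by positivity
  · intro k hk
    simp [hf k (Finset.mem_sdiff.1 hk).2]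

/-- Multiplication by a cutoff `φ` with `|φ| ≤ 1` whose increments are at most `ε` commutes with the
operator up to an error of order `ε`. -/
lemma commutator_bound (v : ℤ → ℝ) (n : ℕ) (f : ℤ → ℂ)
    (hf : ∀ k, k ∉ Finset.Icc (0 : ℤ) n → f k = 0) (φ : ℤ → ℝ) (ε : ℝ)
    (hφ : ∀ k ∈ Finset.Icc (0 : ℤ) n, |φ k| ≤ 1)
    (h₁ : ∀ k, |φ (k + 1) - φ k| ≤ ε) :
    ∑ k ∈ Finset.Icc (0 : ℤ) n, ‖schL v (fun j => φ j * f j) k‖ ^ 2 ≤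
      2 * ∑ k ∈ Finset.Icc (0 : ℤ) n, ‖schL v f k‖ ^ 2 +
        8 * ε ^ 2 * ∑ k ∈ Finset.Icc (0 : ℤ) n, ‖f k‖ ^ 2 := by
  have hpt : ∀ k ∈ Finset.Icc (0 : ℤ) n, ‖schL v (fun j => φ j * f j) k‖ ^ 2 ≤
      2 * ‖schL v f k‖ ^ 2 + 4 * ε ^ 2 * ‖f (k + 1)‖ ^ 2 + 4 * ε ^ 2 * ‖f (k + -1)‖ ^ 2 := by
    intro k hk
    have e : schL v (fun j => φ j * f j) k = φ k * schL v f k +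
        (((φ (k + 1) - φ k : ℝ) : ℂ) * f (k + 1) + ((φ (k - 1) - φ k : ℝ) : ℂ) * f (k + -1)) := by
      simp only [schL, ← sub_eq_add_neg]; push_cast; ring
    have b1 := norm_sq_add_le (φ k * schL v f k)
      (((φ (k + 1) - φ k : ℝ) : ℂ) * f (k + 1) + ((φ (k - 1) - φ k : ℝ) : ℂ) * f (k + -1))
    have b2 := norm_sq_add_le (((φ (k + 1) - φ k : ℝ) : ℂ) * f (k + 1))
      (((φ (k - 1) - φ k : ℝ) : ℂ) * f (k + -1))
    rw [← e] at b1
    simp only [norm_mul, Complex.norm_real, mul_pow, Real.norm_eq_abs] at b1 b2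
    have s1 : |φ k| ^ 2 ≤ 1 := pow_le_one₀ (abs_nonneg _) (hφ k hk)
    have s2 : |φ (k + 1) - φ k| ^ 2 ≤ ε ^ 2 := pow_le_pow_left₀ (abs_nonneg _) (h₁ k) 2
    have s3 : |φ (k - 1) - φ k| ^ 2 ≤ ε ^ 2 := by
      have := h₁ (k - 1)
      rw [sub_add_cancel, abs_sub_comm] at this
      exact pow_le_pow_left₀ (abs_nonneg _) this 2
    have t1 := mul_le_mul_of_nonneg_right s1 (sq_nonneg ‖schL v f k‖)
    have t2 := mul_le_mul_of_nonneg_right s2 (sq_nonneg ‖f (k + 1)‖)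
    have t3 := mul_le_mul_of_nonneg_right s3 (sq_nonneg ‖f (k + -1)‖)
    linarith
  refine (Finset.sum_le_sum hpt).trans ?_
  rw [Finset.sum_add_distrib, Finset.sum_add_distrib, ← Finset.mul_sum, ← Finset.mul_sum,
    ← Finset.mul_sum]
  have u1 := mul_le_mul_of_nonneg_left (sum_shift_le n f hf 1) (by positivity : 0 ≤ 4 * ε ^ 2)
  have u2 := mul_le_mul_of_nonneg_left (sum_shift_le n f hf (-1)) (by positivity : 0 ≤ 4 * ε ^ 2)
  linarith

/-- Gluing: a vector on `[0, n]` is split by the linear cutoffs `1 - k / n` and `k / n` into a part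
vanishing at `n` and a part vanishing at `0`. These are controlled by the sections sharing the left
and the right end of `[0, n]` respectively, and the commutator error `O(1 / n)` is absorbed. -/
lemma section_bound {v : ℤ → ℝ} {C : ℝ} (hC : 0 < C) (n : ℕ) (hn : 8 * C < n)
    (hl : ∃ b : ℤ, n ≤ b ∧ SecLB v 0 b C) (hr : ∃ a : ℤ, a ≤ 0 ∧ SecLB v a n C) :
    SecLB v 0 n (4 * C) := by
  obtain ⟨b, hb, hl⟩ := hl
  obtain ⟨a, ha, hr⟩ := hr
  intro f hf
  have hn0 : (0 : ℝ) < n := by linarith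
  set φ : ℤ → ℝ := fun k => 1 - k / n with hφ
  set ψ : ℤ → ℝ := fun k => k / n with hψ
  have bd : ∀ k ∈ Finset.Icc (0 : ℤ) n, 0 ≤ (k : ℝ) / n ∧ (k : ℝ) / n ≤ 1 := by
    intro k hk
    obtain ⟨h0, h1⟩ := Finset.mem_Icc.1 hk
    have h0' : (0 : ℝ) ≤ k := by exact_mod_cast h0
    have h1' : (k : ℝ) ≤ n := by exact_mod_cast h1
    exact ⟨by positivity, (div_le_one hn0).2 h1'⟩
  have c1 := commutator_bound v n f hf φ (1 / n)
    (fun k hk => abs_le.2 ⟨by have := bd k hk; simp only [hφ]; linarith,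
      by have := bd k hk; simp only [hφ]; linarith⟩)
    (fun k => by
      have : φ (k + 1) - φ k = -(1 / n) := by simp only [hφ]; push_cast; ring
      rw [this, abs_neg, abs_of_pos (by positivity)])
  have c2 := commutator_bound v n f hf ψ (1 / n)
    (fun k hk => abs_le.2 ⟨by have := bd k hk; simp only [hψ]; linarith,
      by have := bd k hk; simp only [hψ]; linarith⟩)
    (fun k => by
      have : ψ (k + 1) - ψ k = 1 / n := by simp only [hψ]; push_cast; ring
      rw [this, abs_of_pos (by positivity)])
  have z1 : ∀ k : ℤ, k ∉ Finset.Icc (0 : ℤ) (n - 1) → (φ k : ℂ) * f k = 0 := by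
    intro k hk
    by_cases h : k = n
    · subst h; simp [hφ, hn0.ne']
    · rw [hf k (by simp at hk ⊢; omega), mul_zero]
  have z2 : ∀ k : ℤ, k ∉ Finset.Icc (1 : ℤ) n → (ψ k : ℂ) * f k = 0 := by
    intro k hk
    by_cases h : k = 0
    · subst h; simp [hψ]
    · rw [hf k (by simp at hk ⊢; omega), mul_zero]
  have r1 := hl.restrict le_rfl hb (fun k => (φ k : ℂ) * f k)
    (fun k hk => z1 k (by simp at hk ⊢; omega)) (fun k hk hk' => by
      simp at hk hk'
      simp only [schL]
      rw [z1 (k + 1) (by simp; omega), z1 (k - 1) (by simp; omega), z1 k (by simp; omega)]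
      simp)
  have r2 := hr.restrict ha le_rfl (fun k => (ψ k : ℂ) * f k)
    (fun k hk => z2 k (by simp at hk ⊢; omega)) (fun k hk hk' => by
      simp at hk hk'
      simp only [schL]
      rw [z2 (k + 1) (by simp; omega), z2 (k - 1) (by simp; omega), z2 k (by simp; omega)]
      simp)
  have split : ∑ k ∈ Finset.Icc (0 : ℤ) n, ‖f k‖ ^ 2 ≤
      2 * ∑ k ∈ Finset.Icc (0 : ℤ) n, ‖(φ k : ℂ) * f k‖ ^ 2 +
      2 * ∑ k ∈ Finset.Icc (0 : ℤ) n, ‖(ψ k : ℂ) * f k‖ ^ 2 := by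
    rw [Finset.mul_sum, Finset.mul_sum, ← Finset.sum_add_distrib]
    refine Finset.sum_le_sum fun k _ => ?_
    have := norm_sq_add_le ((φ k : ℂ) * f k) ((ψ k : ℂ) * f k)
    have e : (φ k : ℂ) * f k + (ψ k : ℂ) * f k = f k := by
      simp only [hφ, hψ]; push_cast; ring
    rwa [e] at this
  set S := ∑ k ∈ Finset.Icc (0 : ℤ) n, ‖f k‖ ^ 2
  set T := ∑ k ∈ Finset.Icc (0 : ℤ) n, ‖schL v f k‖ ^ 2
  have hS : 0 ≤ S := by positivity
  have hC2 : 0 ≤ C ^ 2 := by positivity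
  have m1 := mul_le_mul_of_nonneg_left c1 hC2
  have m2 := mul_le_mul_of_nonneg_left c2 hC2
  have small : C ^ 2 * (1 / (n : ℝ)) ^ 2 ≤ 1 / 64 := by
    rw [← mul_pow, mul_one_div]
    have : C / n ≤ 1 / 8 := by rw [div_le_iff₀ hn0]; linarith
    have h0 : 0 ≤ C / n := by positivity
    nlinarith
  -- Altogether `S ≤ 8 C² T + 32 (C / n)² S ≤ 8 C² T + S / 2`.
  have := mul_le_mul_of_nonneg_right small hS
  nlinarith

/-! ### The half-line operator -/

/-- The lower bound holds for finitely supported sequences, which see only a section starting at `0`,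
and extends to `ℓ²(ℕ)` by density. -/
lemma halfLine_bound {v : ℤ → ℝ} {C : ℝ} (hC : 0 < C)
    (hl : ∀ n : ℕ, ∃ b : ℤ, n ≤ b ∧ SecLB v 0 b C)
    (Hp : lp (fun _ : ℕ => ℂ) 2 →L[ℂ] lp (fun _ : ℕ => ℂ) 2)
    (hH0 : ∀ x : lp (fun _ : ℕ => ℂ) 2, Hp x 0 = x 1 + (v 0 : ℂ) * x 0)
    (hHp : ∀ x : lp (fun _ : ℕ => ℂ) 2, ∀ k : ℕ,
      Hp x (k + 1) = x (k + 2) + x k + (v ((k : ℤ) + 1) : ℂ) * x (k + 1))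
    (x : lp (fun _ : ℕ => ℂ) 2) : ‖x‖ ≤ C * ‖Hp x‖ := by
  have nsq : ∀ (y : lp (fun _ : ℕ => ℂ) 2) (F : ℤ → ℂ) (m : ℕ), (∀ k : ℕ, y k = F k) →
      (∀ k : ℕ, m < k → y k = 0) → ‖y‖ ^ 2 = ∑ k ∈ Finset.Icc (0 : ℤ) m, ‖F k‖ ^ 2 := by
    intro y F m hF hy
    have h1 := lp.norm_rpow_eq_tsum (p := 2) (by norm_num) y
    simp only [ENNReal.toReal_ofNat, Real.rpow_ofNat] at h1
    rw [h1, ← sum_fin_eq_Icc m fun k => ‖F k‖ ^ 2,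
      Fin.sum_univ_eq_sum_range (fun i : ℕ => ‖F (i : ℤ)‖ ^ 2) (m + 1),
      tsum_eq_sum (s := Finset.range (m + 1))]
    · simp [hF]
    · intro k hk
      rw [hy k (by simp at hk; omega)]; simp
  have fin : ∀ (y : lp (fun _ : ℕ => ℂ) 2) (m : ℕ), (∀ k : ℕ, m < k → y k = 0) →
      ‖y‖ ≤ C * ‖Hp y‖ := by
    intro y m hy
    let F : ℤ → ℂ := fun k => if 0 ≤ k then y k.toNat else 0
    have hF : ∀ k : ℕ, y k = F k := by intro k; simp [F]
    have hneg : ∀ k : ℤ, k < 0 → F k = 0 := fun k hk => if_neg (by omega)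
    have hbig : ∀ k : ℤ, (m : ℤ) < k → F k = 0 := by
      intro k hk
      lift k to ℕ using by omega
      rw [← hF, hy k (by omega)]
    have hL : ∀ k : ℕ, Hp y k = schL v F k := by
      rintro (_ | k)
      · rw [hH0, schL, hF, hF]; simp [hneg]
      · rw [hHp, schL, hF, hF, hF]; push_cast
        rw [add_sub_cancel_right, add_assoc (k : ℤ) 1 1]; rfl
    -- `Hp y` reaches one site further than `y`, hence `m + 1`.
    obtain ⟨b, hb, hlb⟩ := hl (m + 1)
    have hLz : ∀ k : ℤ, k ∉ Finset.Icc (0 : ℤ) (m + 1 : ℕ) → 0 ≤ k → schL v F k = 0 := by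
      intro k hk hk0
      simp at hk
      simp only [schL]
      rw [hbig (k + 1) (by omega), hbig (k - 1) (by omega), hbig k (by omega)]
      simp
    have := hlb.restrict le_rfl hb F (fun k hk => by
        by_cases h : k < 0
        · exact hneg k h
        · exact hbig k (by simp at hk; omega))
      (fun k hk hk' => hLz k hk' (Finset.mem_Icc.1 hk).1)
    rw [← nsq y F (m + 1) hF fun k hk => hy k (by omega),
      ← nsq (Hp y) (schL v F) (m + 1) hL fun k hk => by
        rw [hL]; exact hLz k (by simp; omega) (by omega), ← mul_pow] at this
    exact le_of_sq_le_sq this (by positivity)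
  have hs := lp.hasSum_single (p := 2) (by norm_num) x
  refine le_of_tendsto_of_tendsto hs.norm
    ((((Hp.continuous.tendsto _).comp hs).norm).const_mul C) (Filter.Eventually.of_forall fun s => ?_)
  refine fin _ (s.sup id) fun k hk => ?_
  have hks : k ∉ s := fun h => absurd (Finset.le_sup (f := id) h) (by simpa using hk)
  rw [lp.coeFn_sum, Finset.sum_apply]
  refine Finset.sum_eq_zero fun i hi => ?_
  rw [lp.single_apply_ne]
  rintro rfl; exact hks hi

/-- Bounded below and symmetric implies bijective: the range is closed, and a vector `y` orthogonal
to it satisfies `(Hp y) k = ⟪Hp e_k, y⟫ = 0` for all `k`, hence `y = 0`. -/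
lemma halfLine_bijective {v : ℤ → ℝ} {C : ℝ} (hC : 0 < C)
    (Hp : lp (fun _ : ℕ => ℂ) 2 →L[ℂ] lp (fun _ : ℕ => ℂ) 2)
    (hH0 : ∀ x : lp (fun _ : ℕ => ℂ) 2, Hp x 0 = x 1 + (v 0 : ℂ) * x 0)
    (hHp : ∀ x : lp (fun _ : ℕ => ℂ) 2, ∀ k : ℕ,
      Hp x (k + 1) = x (k + 2) + x k + (v ((k : ℤ) + 1) : ℂ) * x (k + 1))
    (hb : ∀ x, ‖x‖ ≤ C * ‖Hp x‖) : Function.Bijective Hp := by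
  have hal : AntilipschitzWith ⟨C, hC.le⟩ Hp := AddMonoidHomClass.antilipschitz_of_bound Hp hb
  have hcl : IsClosed (Hp.range : Set (lp (fun _ : ℕ => ℂ) 2)) :=
    hal.isClosed_range Hp.uniformContinuous
  refine ⟨hal.injective, LinearMap.range_eq_top.1 ?_⟩
  have : CompleteSpace Hp.range := hcl.completeSpace_coe
  rw [← Submodule.orthogonal_eq_bot_iff, Submodule.eq_bot_iff]
  intro y hy
  have hy' : ∀ x, inner ℂ (Hp x) y = 0 := fun x => hy _ ⟨x, rfl⟩
  have e0 : Hp (lp.single 2 0 1) = lp.single 2 1 1 + lp.single 2 0 (v 0 : ℂ) := by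
    ext k
    rcases k with _ | k
    · rw [hH0]
      simp
    · rw [hHp]
      simp [Pi.single_apply]
  have e1 : ∀ j : ℕ, Hp (lp.single 2 (j + 1) 1) =
      lp.single 2 (j + 2) 1 + lp.single 2 j 1 + lp.single 2 (j + 1) (v (j + 1) : ℂ) := by
    intro j
    ext k
    rcases k with _ | k
    · rw [hH0]
      simp [Pi.single_apply, eq_comm]
    · rw [hHp]
      simp only [lp.coeFn_add, lp.single_apply, Pi.single_apply, Pi.add_apply]
      split_ifs <;> first | omega | simp_all
  have hz : Hp y = 0 := by
    ext k
    rcases k with _ | k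
    · have := hy' (lp.single 2 0 1)
      rw [e0, inner_add_left, lp.inner_single_left, lp.inner_single_left] at this
      simpa [hH0, mul_comm] using this
    · have := hy' (lp.single 2 (k + 1) 1)
      rw [e1, inner_add_left, inner_add_left, lp.inner_single_left, lp.inner_single_left,
        lp.inner_single_left] at this
      simpa [hHp, mul_comm] using this
  exact hal.injective (hz.trans (map_zero Hp).symm)

/-- if the FSM is applicable to the two-sided `K`-periodic discrete
Schrödinger operator `H`, then it is applicable to the one-sided operator `H₊`. -/
theorem stmt6 (K : ℕ) (hK : 1 ≤ K) (v : ℤ → ℝ)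
    (hper : ∀ n : ℤ, v (n + (K : ℤ)) = v n)
    (H : lp (fun _ : ℤ => ℂ) 2 →L[ℂ] lp (fun _ : ℤ => ℂ) 2)
    (hH : ∀ x : lp (fun _ : ℤ => ℂ) 2, ∀ n : ℤ,
      H x n = x (n + 1) + x (n - 1) + (v n : ℂ) * x n)
    (Hp : lp (fun _ : ℕ => ℂ) 2 →L[ℂ] lp (fun _ : ℕ => ℂ) 2)
    (hH0 : ∀ x : lp (fun _ : ℕ => ℂ) 2, Hp x 0 = x 1 + (v 0 : ℂ) * x 0)
    (hHp : ∀ x : lp (fun _ : ℕ => ℂ) 2, ∀ k : ℕ,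
      Hp x (k + 1) = x (k + 2) + x k + (v ((k : ℤ) + 1) : ℂ) * x (k + 1))
    (happl : Function.Bijective H ∧ schStable v) :
    Function.Bijective Hp ∧ schStablePlus v := by
  obtain ⟨-, n₀, C, hC, hst⟩ := happl
  have hsec : ∀ n : ℕ, n₀ ≤ n → SecLB v (-n) n C := by
    intro n hn
    have h1 := hst n hn
    rw [schFinSec_eq, ← secLB_iff_inv _ _ hC] at h1
    convert h1.shift using 1 <;> (push_cast; ring)
  have hl := left_bound hK hper hsec
  have hr := right_bound hK hper hsec
  refine ⟨halfLine_bijective hC Hp hH0 hHp (halfLine_bound hC hl Hp hH0 hHp),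
    ⌈8 * C⌉₊ + 1, 4 * C, by positivity, fun n hn => ?_⟩
  rw [← secLB_iff_inv v n (by positivity)]
  have hn' : 8 * C < n := Nat.lt_of_ceil_lt hn
  exact section_bound hC n hn' (hl n) (hr n)
end
end

section
/- Let K ≥ 1, let v : ℤ → ℝ be a K-periodic real potential and H the discrete Schrödinger operator on ℓ²(ℤ) with potential v. For every E ∈ ℝ: (E : ℂ) belongs to the spectrum of H if and only if |tr(M(E))| ≤ 2. -/
/-! The discriminant `t = tr M(E)` enters through one identity. If `f = (H - E) x`, iterating the
transfer matrices from site `n` and applying Cayley–Hamilton to the monodromy matrix (determinant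
`1`, trace `t` independent of the base point) gives
`x (n + 2K) - t x (n + K) + x n = A f n`,
where `A f n` is a combination of `f n, …, f (n + 2K - 1)` with periodic coefficients
(`discriminant_identity`).

* If `|t| > 2`: `A` is a bounded operator on `ℓ²`, while the left side has norm at least
  `(|t| - 2) ‖x‖`, since shifts are isometries. So `H - E` is bounded below, and being
  self-adjoint it is invertible.
* If `|t| ≤ 2` and `H - E` were invertible, let `g = (H - E)⁻¹ δ₀`. Away from the site `0` the
  identity is homogeneous, so along every progression of step `K` in either half-line `g` solves
  `y (m + 2) = t y (m + 1) - y m` and tends to `0`. For `|t| ≤ 2` the invariant quadratic form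
  `a² - t a b + b²` is positive semidefinite, which forces `y = 0` (`recurrence_eq_zero`). Hence
  `g = 0`, contradicting `(H - E) g = δ₀`. -/

noncomputable section

open Matrix

/-- The monodromy matrix `M(E) = T(K-1, E) ⋯ T(1, E) T(0, E)`. -/
def monodromyE (v : ℤ → ℝ) (K : ℕ) (E : ℝ) : Matrix (Fin 2) (Fin 2) ℝ :=
  (((List.range K).map fun i => transfer v E (i : ℤ)).reverse).prod

/-! ### Transfer matrices -/

/-- The product `T(n+j-1) ⋯ T(n)` of `j` consecutive transfer matrices starting at site `n`. -/
def transferProd (v : ℤ → ℝ) (E : ℝ) (n : ℤ) : ℕ → Matrix (Fin 2) (Fin 2) ℝ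
  | 0 => 1
  | j + 1 => transfer v E (n + j) * transferProd v E n j

lemma transferProd_zero_eq (v : ℤ → ℝ) (K : ℕ) (E : ℝ) :
    transferProd v E 0 K = monodromyE v K E := by
  induction K with
  | zero => simp [transferProd, monodromyE]
  | succ k ih => simp [transferProd, ih, monodromyE, List.range_succ]

lemma transferProd_add (v : ℤ → ℝ) (E : ℝ) (n : ℤ) (i j : ℕ) :
    transferProd v E n (i + j) = transferProd v E (n + i) j * transferProd v E n i := by
  induction j with
  | zero => simp [transferProd]
  | succ k ih =>
    rw [← add_assoc, transferProd, ih, transferProd, Matrix.mul_assoc]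
    congr 2
    push_cast
    ring

lemma det_transfer (v : ℤ → ℝ) (E : ℝ) (n : ℤ) : (transfer v E n).det = 1 := by
  simp [transfer, Matrix.det_fin_two]

lemma det_transferProd (v : ℤ → ℝ) (E : ℝ) (n : ℤ) (j : ℕ) : (transferProd v E n j).det = 1 := by
  induction j with
  | zero => simp [transferProd]
  | succ k ih => rw [transferProd, Matrix.det_mul, ih, det_transfer, one_mul]

lemma transferProd_add_period (v : ℤ → ℝ) (E : ℝ) (K : ℕ) (hper : ∀ n : ℤ, v (n + (K : ℤ)) = v n)
    (n : ℤ) (j : ℕ) : transferProd v E (n + K) j = transferProd v E n j := by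
  induction j with
  | zero => rfl
  | succ k ih =>
    rw [transferProd, transferProd, ih]
    congr 1
    rw [transfer, transfer, add_right_comm, hper]

/-- Shifting the base point by one site conjugates the monodromy matrix by a transfer matrix. -/
lemma trace_transferProd_succ (v : ℤ → ℝ) (E : ℝ) (K : ℕ)
    (hper : ∀ n : ℤ, v (n + (K : ℤ)) = v n) (n : ℤ) :
    (transferProd v E (n + 1) K).trace = (transferProd v E n K).trace := by
  have h1 : transferProd v E (n + 1) K * transfer v E n
      = transfer v E n * transferProd v E n K := by
    have h := transferProd_add v E n 1 K
    rw [add_comm 1 K, transferProd] at h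
    have hT : transfer v E (n + K) = transfer v E n := by rw [transfer, transfer, hper]
    rw [hT] at h
    rw [h]
    simp [transferProd]
  have hu : IsUnit (transfer v E n).det := by rw [det_transfer]; exact isUnit_one
  calc (transferProd v E (n + 1) K).trace
      = (transferProd v E (n + 1) K * transfer v E n * (transfer v E n)⁻¹).trace := by
        rw [Matrix.mul_nonsing_inv_cancel_right _ _ hu]
    _ = _ := by
        rw [h1, Matrix.trace_mul_comm, ← Matrix.mul_assoc, Matrix.nonsing_inv_mul _ hu,
          Matrix.one_mul]

lemma trace_transferProd (v : ℤ → ℝ) (E : ℝ) (K : ℕ) (hper : ∀ n : ℤ, v (n + (K : ℤ)) = v n)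
    (n : ℤ) : (transferProd v E n K).trace = (monodromyE v K E).trace := by
  rw [← transferProd_zero_eq]
  induction n using Int.induction_on with
  | zero => rfl
  | succ i ih => rw [trace_transferProd_succ v E K hper, ih]
  | pred i ih => rw [← ih, ← trace_transferProd_succ v E K hper, sub_add_cancel]

/-! ### The discriminant identity -/

/-- The Duhamel term: the contribution of the source values `f n, …, f (n + j - 1)` to the pair
`(x (n + j), x (n + j - 1))` when `(H - E) x = f`. -/
def duhamel (v : ℤ → ℝ) (E : ℝ) (f : ℤ → ℂ) (n : ℤ) : ℕ → ℂ × ℂ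
  | 0 => (0, 0)
  | j + 1 => (f (n + j) + (E - v (n + j)) * (duhamel v E f n j).1 - (duhamel v E f n j).2,
      (duhamel v E f n j).1)

lemma duhamel_eq_zero (v : ℤ → ℝ) (E : ℝ) (f : ℤ → ℂ) (n : ℤ) (j : ℕ)
    (h : ∀ i : ℕ, i < j → f (n + i) = 0) : duhamel v E f n j = (0, 0) := by
  induction j with
  | zero => rfl
  | succ k ih =>
    rw [duhamel, ih fun i hi => h i (by omega), h k (by omega)]
    simp

lemma eq_transferProd_add_duhamel (v : ℤ → ℝ) (E : ℝ) (x f : ℤ → ℂ)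
    (hf : ∀ n, f n = x (n + 1) + x (n - 1) + v n * x n - E * x n) (n : ℤ) (j : ℕ) :
    x (n + j) = transferProd v E n j 0 0 * x n + transferProd v E n j 0 1 * x (n - 1)
        + (duhamel v E f n j).1 ∧
    x (n + j - 1) = transferProd v E n j 1 0 * x n + transferProd v E n j 1 1 * x (n - 1)
        + (duhamel v E f n j).2 := by
  induction j with
  | zero => simp [transferProd, duhamel]
  | succ k ih =>
    obtain ⟨h1, h2⟩ := ih
    have h := hf (n + k)
    have e : n + ((k + 1 : ℕ) : ℤ) = n + k + 1 := by push_cast; ring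
    rw [e, add_sub_cancel_right]
    simp only [transferProd, duhamel, transfer, Matrix.mul_apply, Fin.sum_univ_two]
    simp
    constructor
    · linear_combination (-1 : ℂ) * h + ((E : ℂ) - v (n + k)) * h1 - h2
    · linear_combination h1

/-- The source term in `discriminant_identity`. -/
def discSource (v : ℤ → ℝ) (E : ℝ) (K : ℕ) (f : ℤ → ℂ) (n : ℤ) : ℂ :=
  (duhamel v E f n (K + K)).1 - (monodromyE v K E).trace * (duhamel v E f n K).1

/-- Cayley–Hamilton for the monodromy matrix, read off on solutions of `(H - E) x = f`. -/
lemma discriminant_identity (v : ℤ → ℝ) (E : ℝ) (K : ℕ) (hper : ∀ n : ℤ, v (n + (K : ℤ)) = v n)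
    (x f : ℤ → ℂ) (hf : ∀ n, f n = x (n + 1) + x (n - 1) + v n * x n - E * x n) (n : ℤ) :
    x (n + K + K) - (monodromyE v K E).trace * x (n + K) + x n = discSource v E K f n := by
  have h1 := (eq_transferProd_add_duhamel v E x f hf n K).1
  have h2 := (eq_transferProd_add_duhamel v E x f hf n (K + K)).1
  rw [transferProd_add, transferProd_add_period v E K hper] at h2
  have hd := det_transferProd v E n K
  have ht := trace_transferProd v E K hper n
  rw [discSource, ← ht]
  rw [Matrix.det_fin_two] at hd
  have hd' := congrArg (fun r : ℝ => (r : ℂ)) hd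
  simp only [Matrix.mul_apply, Fin.sum_univ_two, Matrix.trace_fin_two] at h2 ⊢
  push_cast at h2 hd' ⊢
  rw [← add_assoc] at h2
  linear_combination h2 - ((transferProd v E n K 0 0 : ℂ) + transferProd v E n K 1 1) * h1
    - x n * hd'

/-! ### Decaying solutions of the scalar recurrence -/

open Filter Topology

/-- For `|t| ≤ 2` the form `a² - t a b + b²` is conserved and positive semidefinite, so a solution
tending to `0` lies in its kernel at every time; in the kernel `y²` is itself conserved. -/
lemma recurrence_real_eq_zero (t : ℝ) (ht : |t| ≤ 2) (y : ℕ → ℝ)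
    (hrec : ∀ m, y (m + 2) - t * y (m + 1) + y m = 0) (hy : Tendsto y atTop (𝓝 0)) : y 0 = 0 := by
  have hy1 : Tendsto (fun m => y (m + 1)) atTop (𝓝 0) := (tendsto_add_atTop_iff_nat 1).2 hy
  have hq : ∀ m, y (m + 1) ^ 2 - t * y m * y (m + 1) + y m ^ 2
      = y 1 ^ 2 - t * y 0 * y 1 + y 0 ^ 2 := by
    intro m
    induction m with
    | zero => simp
    | succ k ih =>
      rw [← ih]
      linear_combination (y (k + 2) - y k) * hrec k
  have hq0 : y 1 ^ 2 - t * y 0 * y 1 + y 0 ^ 2 = 0 := by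
    have hl : Tendsto (fun m => y (m + 1) ^ 2 - t * y m * y (m + 1) + y m ^ 2) atTop
        (𝓝 (0 ^ 2 - t * 0 * 0 + 0 ^ 2)) :=
      ((hy1.pow 2).sub ((hy.const_mul t).mul hy1)).add (hy.pow 2)
    simp only [hq] at hl
    simpa using tendsto_nhds_unique tendsto_const_nhds hl
  have ht4 : t ^ 2 ≤ 4 := by
    have := sq_le_sq' (abs_le.1 ht).1 (abs_le.1 ht).2
    linarith
  have hstep : ∀ m, y (m + 1) ^ 2 = y m ^ 2 := by
    intro m
    have h := (hq m).trans hq0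
    have hb : 0 ≤ (1 - t ^ 2 / 4) * y m ^ 2 := mul_nonneg (by linarith) (sq_nonneg _)
    have ha : 0 ≤ (y (m + 1) - t / 2 * y m) ^ 2 := sq_nonneg _
    have hsum : (y (m + 1) - t / 2 * y m) ^ 2 + (1 - t ^ 2 / 4) * y m ^ 2 = 0 := by
      linear_combination h
    have ha0 : y (m + 1) - t / 2 * y m = 0 := pow_eq_zero_iff two_ne_zero |>.1 (by linarith)
    have hb0 : (1 - t ^ 2 / 4) * y m ^ 2 = 0 := by linarith
    linear_combination (y (m + 1) + t / 2 * y m) * ha0 - hb0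
  have hconst : ∀ m, y m ^ 2 = y 0 ^ 2 := by
    intro m
    induction m with
    | zero => rfl
    | succ k ih => rw [hstep, ih]
  have hl := hy.pow 2
  simp only [hconst] at hl
  have := tendsto_nhds_unique tendsto_const_nhds hl
  simpa using this

lemma recurrence_eq_zero (t : ℝ) (ht : |t| ≤ 2) (y : ℕ → ℂ)
    (hrec : ∀ m, y (m + 2) - t * y (m + 1) + y m = 0) (hy : Tendsto y atTop (𝓝 0)) : y 0 = 0 := by
  apply Complex.ext
  · refine recurrence_real_eq_zero t ht (fun m => (y m).re) (fun m => ?_)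
      ((Complex.continuous_re.tendsto 0).comp hy)
    simpa using congrArg Complex.re (hrec m)
  · refine recurrence_real_eq_zero t ht (fun m => (y m).im) (fun m => ?_)
      ((Complex.continuous_im.tendsto 0).comp hy)
    simpa using congrArg Complex.im (hrec m)

lemma lp_tendsto_cofinite (x : lp (fun _ : ℤ => ℂ) 2) : Tendsto (fun n => x n) cofinite (𝓝 0) := by
  have h := ((lp.memℓp x).summable (by norm_num)).tendsto_cofinite_zero
  rw [tendsto_zero_iff_norm_tendsto_zero]
  have h2 := h.sqrt
  simpa using h2

/-! ### Shift operators -/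

lemma memℓp_shift (x : lp (fun _ : ℤ => ℂ) 2) (k : ℤ) :
    Memℓp (E := fun _ : ℤ => ℂ) (fun n => x (n + k)) 2 := by
  apply memℓp_gen
  exact (Equiv.addRight k).summable_iff.2 ((lp.memℓp x).summable (by norm_num))

lemma norm_shift (x : lp (fun _ : ℤ => ℂ) 2) (k : ℤ) :
    ‖(⟨fun n => x (n + k), memℓp_shift x k⟩ : lp (fun _ : ℤ => ℂ) 2)‖ = ‖x‖ := by
  rw [lp.norm_eq_tsum_rpow (by norm_num), lp.norm_eq_tsum_rpow (by norm_num)]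
  congr 1
  exact (Equiv.addRight k).tsum_eq (fun n => ‖x n‖ ^ (2 : ENNReal).toReal)

/-- The shift `(S_k x) n = x (n + k)`, an isometry of `ℓ²(ℤ)`. -/
def shift (k : ℤ) : lp (fun _ : ℤ => ℂ) 2 →ₗᵢ[ℂ] lp (fun _ : ℤ => ℂ) 2 where
  toFun x := ⟨fun n => x (n + k), memℓp_shift x k⟩
  map_add' _ _ := rfl
  map_smul' _ _ := rfl
  norm_map' x := norm_shift x k

lemma shift_apply (k : ℤ) (x : lp (fun _ : ℤ => ℂ) 2) (n : ℤ) : shift k x n = x (n + k) := rfl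

/-- The translated potential, as a multiplication operator. -/
lemma exists_potential (v : ℤ → ℝ) (H : lp (fun _ : ℤ => ℂ) 2 →L[ℂ] lp (fun _ : ℤ => ℂ) 2)
    (hH : ∀ x : lp (fun _ : ℤ => ℂ) 2, ∀ n : ℤ,
      H x n = x (n + 1) + x (n - 1) + (v n : ℂ) * x n) (k : ℤ) :
    ∃ V : lp (fun _ : ℤ => ℂ) 2 →L[ℂ] lp (fun _ : ℤ => ℂ) 2,
      ∀ x n, V x n = (v (n + k) : ℂ) * x n := by
  let S := fun k => (shift k).toContinuousLinearMap
  refine ⟨S k ∘L (H - S 1 - S (-1)) ∘L S (-k), fun x n => ?_⟩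
  change (H (shift (-k) x) (n + k) - shift 1 (shift (-k) x) (n + k)
    - shift (-1) (shift (-k) x) (n + k)) = _
  rw [hH]
  simp only [shift_apply]
  rw [← sub_eq_add_neg (n + k) 1, add_neg_cancel_right]
  ring

/-- The Duhamel terms are bounded operators applied to the source. -/
lemma exists_duhamel_clm (v : ℤ → ℝ) (H : lp (fun _ : ℤ => ℂ) 2 →L[ℂ] lp (fun _ : ℤ => ℂ) 2)
    (hH : ∀ x : lp (fun _ : ℤ => ℂ) 2, ∀ n : ℤ,
      H x n = x (n + 1) + x (n - 1) + (v n : ℂ) * x n) (E : ℝ) (j : ℕ) :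
    ∃ A B : lp (fun _ : ℤ => ℂ) 2 →L[ℂ] lp (fun _ : ℤ => ℂ) 2,
      ∀ f : lp (fun _ : ℤ => ℂ) 2, ∀ n : ℤ, duhamel v E f n j = (A f n, B f n) := by
  induction j with
  | zero => exact ⟨0, 0, fun f n => rfl⟩
  | succ k ih =>
    obtain ⟨A, B, h⟩ := ih
    obtain ⟨V, hV⟩ := exists_potential v H hH k
    refine ⟨(shift k).toContinuousLinearMap + (E : ℂ) • A - V ∘L A - B, A, fun f n => ?_⟩
    rw [duhamel, h]
    congr 1
    change _ = shift k f n + (E : ℂ) * A f n - V (A f) n - B f n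
    rw [hV, shift_apply]
    ring

/-! ### Self-adjointness and the resolvent -/

lemma inner_shift_left (k : ℤ) (x y : lp (fun _ : ℤ => ℂ) 2) :
    inner ℂ (shift k x) y = inner ℂ x (shift (-k) y) := by
  rw [lp.inner_eq_tsum, lp.inner_eq_tsum, ← (Equiv.addRight (-k)).tsum_eq]
  simp [shift_apply]

lemma schrodinger_symm (v : ℤ → ℝ) (H : lp (fun _ : ℤ => ℂ) 2 →L[ℂ] lp (fun _ : ℤ => ℂ) 2)
    (hH : ∀ x : lp (fun _ : ℤ => ℂ) 2, ∀ n : ℤ,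
      H x n = x (n + 1) + x (n - 1) + (v n : ℂ) * x n) (x y : lp (fun _ : ℤ => ℂ) 2) :
    inner ℂ (H x) y = inner ℂ x (H y) := by
  obtain ⟨V, hV⟩ := exists_potential v H hH 0
  have hdec : ∀ z, H z = shift 1 z + shift (-1) z + V z := by
    intro z
    ext n
    change _ = shift 1 z n + shift (-1) z n + V z n
    rw [hH, hV, shift_apply, shift_apply, add_zero, sub_eq_add_neg]
  have hVs : inner ℂ (V x) y = inner ℂ x (V y) := by
    rw [lp.inner_eq_tsum, lp.inner_eq_tsum]
    refine tsum_congr fun n => ?_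
    simp only [hV, RCLike.inner_apply, map_mul, Complex.conj_ofReal]
    ring
  rw [hdec, hdec, inner_add_left, inner_add_left, inner_add_right, inner_add_right, hVs,
    inner_shift_left, inner_shift_left, neg_neg]
  ring

/-- A symmetric operator that is bounded below is invertible: its range is closed, and the
orthogonal complement of the range is its kernel. -/
lemma isUnit_of_symm_of_bound {X : Type*} [NormedAddCommGroup X] [InnerProductSpace ℂ X]
    [CompleteSpace X] (L : X →L[ℂ] X) (hL : ∀ x y, inner ℂ (L x) y = inner ℂ x (L y))
    (C : ℝ) (hC : ∀ x, ‖x‖ ≤ C * ‖L x‖) : IsUnit L := by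
  rw [ContinuousLinearMap.isUnit_iff_bijective,
    ContinuousLinearMap.bijective_iff_dense_range_and_antilipschitz]
  constructor
  · rw [Submodule.topologicalClosure_eq_top_iff, Submodule.eq_bot_iff]
    intro y hy
    have h0 : L y = 0 := by
      have := (Submodule.mem_orthogonal _ _).1 hy (L (L y)) ⟨L y, rfl⟩
      rwa [hL, inner_self_eq_zero] at this
    have := hC y
    rw [h0, norm_zero, mul_zero] at this
    exact norm_le_zero_iff.1 this
  · refine ⟨C.toNNReal, L.antilipschitz_of_bound fun x => (hC x).trans ?_⟩
    gcongr
    exact Real.le_coe_toNNReal C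

/-- the trace condition characterises the spectrum of a `K`-periodic
discrete Schrödinger operator. -/
theorem stmt7 (K : ℕ) (hK : 1 ≤ K) (v : ℤ → ℝ)
    (hper : ∀ n : ℤ, v (n + (K : ℤ)) = v n)
    (H : lp (fun _ : ℤ => ℂ) 2 →L[ℂ] lp (fun _ : ℤ => ℂ) 2)
    (hH : ∀ x : lp (fun _ : ℤ => ℂ) 2, ∀ n : ℤ,
      H x n = x (n + 1) + x (n - 1) + (v n : ℂ) * x n)
    (E : ℝ) :
    (E : ℂ) ∈ spectrum ℂ H ↔ |Matrix.trace (monodromyE v K E)| ≤ 2 := by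
  set t := Matrix.trace (monodromyE v K E) with ht
  set L := H - algebraMap ℂ _ (E : ℂ) with hLdef
  have hLx : ∀ x, L x = H x - (E : ℂ) • x := fun x => rfl
  have hL : ∀ (x : lp (fun _ : ℤ => ℂ) 2) (n : ℤ),
      L x n = x (n + 1) + x (n - 1) + v n * x n - E * x n := by
    intro x n
    rw [← hH]
    rfl
  rw [spectrum.mem_iff, IsUnit.sub_iff, ← hLdef]
  constructor
  · intro hspec
    by_contra! hgt
    apply hspec
    obtain ⟨A₂, _, hA₂⟩ := exists_duhamel_clm v H hH E (K + K)
    obtain ⟨A₁, _, hA₁⟩ := exists_duhamel_clm v H hH E K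
    set A := A₂ - (t : ℂ) • A₁
    have hid : ∀ x, shift (K + K) x - (t : ℂ) • shift K x + x = A (L x) := by
      intro x
      ext n
      change x (n + (K + K)) - (t : ℂ) * x (n + K) + x n
        = A₂ (L x) n - (t : ℂ) * A₁ (L x) n
      rw [← add_assoc, discriminant_identity v E K hper x (L x) (hL x) n, discSource, hA₂, hA₁]
    refine isUnit_of_symm_of_bound L (fun x y => ?_) (‖A‖ / (|t| - 2)) fun x => ?_
    · rw [hLx, hLx, inner_sub_left, inner_sub_right, schrodinger_symm v H hH, inner_smul_left,
        inner_smul_right, Complex.conj_ofReal]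
    · have hlow : |t| * ‖x‖ ≤ ‖A (L x)‖ + ‖x‖ + ‖x‖ := by
        calc |t| * ‖x‖ = ‖(t : ℂ) • shift K x‖ := by
              rw [norm_smul, LinearIsometry.norm_map, Complex.norm_real, Real.norm_eq_abs]
          _ = ‖shift (K + K) x + x - A (L x)‖ := by
              rw [← hid]
              congr 1
              abel
          _ ≤ ‖shift (K + K) x‖ + ‖x‖ + ‖A (L x)‖ :=
              (norm_sub_le _ _).trans (by gcongr; exact norm_add_le _ _)
          _ = _ := by rw [LinearIsometry.norm_map]; ring
      have hA := A.le_opNorm (L x)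
      rw [div_mul_eq_mul_div, le_div_iff₀ (by linarith)]
      linarith
  · intro hle hunit
    obtain ⟨g, hg⟩ := (ContinuousLinearMap.isUnit_iff_bijective.1 hunit).2
      (lp.single 2 (0 : ℤ) (1 : ℂ))
    have hsrc : ∀ n : ℤ, n ≠ 0 → L g n = 0 := by
      intro n hn
      rw [hg]
      exact lp.single_apply_ne 2 0 1 hn
    -- The window `n, …, n + 2K - 1` misses the support of `δ₀`.
    have hrec : ∀ n : ℤ, (0 < n ∨ n + K + K ≤ 0) → g (n + K + K) - t * g (n + K) + g n = 0 := by
      intro n hn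
      rw [discriminant_identity v E K hper g (L g) (hL g) n, discSource,
        duhamel_eq_zero v E _ n (K + K) fun i hi => hsrc _ (by omega),
        duhamel_eq_zero v E _ n K fun i hi => hsrc _ (by omega)]
      simp
    have hg0 : ∀ n, g n = 0 := by
      intro n
      rcases lt_or_ge 0 n with hn | hn
      · have hinj : Function.Injective fun m : ℕ => n + m * (K : ℤ) := by
          intro a b hab
          have : (a : ℤ) * K = b * K := by simpa using hab
          exact_mod_cast mul_right_cancel₀ (by exact_mod_cast (by omega : K ≠ 0)) this
        have h := recurrence_eq_zero t hle (fun m : ℕ => g (n + m * (K : ℤ))) (fun m => ?_)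
          ((lp_tendsto_cofinite g).comp (Nat.cofinite_eq_atTop ▸ hinj.tendsto_cofinite))
        · simpa using h
        · have := hrec (n + m * (K : ℤ)) (Or.inl (by positivity))
          have hw : n + m * (K : ℤ) + K = n + ((m + 1 : ℕ) : ℤ) * K := by push_cast; ring
          have hw' : n + m * (K : ℤ) + K + K = n + ((m + 2 : ℕ) : ℤ) * K := by push_cast; ring
          rwa [hw', hw] at this
      · have hinj : Function.Injective fun m : ℕ => n - m * (K : ℤ) := by
          intro a b hab
          have : (a : ℤ) * K = b * K := by simpa using hab
          exact_mod_cast mul_right_cancel₀ (by exact_mod_cast (by omega : K ≠ 0)) this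
        have h := recurrence_eq_zero t hle (fun m : ℕ => g (n - m * (K : ℤ))) (fun m => ?_)
          ((lp_tendsto_cofinite g).comp (Nat.cofinite_eq_atTop ▸ hinj.tendsto_cofinite))
        · simpa using h
        · have hw : n - ((m + 2 : ℕ) : ℤ) * K + K + K = n - m * K := by push_cast; ring
          have hw' : n - ((m + 2 : ℕ) : ℤ) * K + K = n - ((m + 1 : ℕ) : ℤ) * K := by
            push_cast; ring
          have hp : 0 ≤ (m : ℤ) * K := by positivity
          have := hrec (n - ((m + 2 : ℕ) : ℤ) * K) (Or.inr (by rw [hw]; linarith))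
          rw [hw, hw'] at this
          linear_combination this
    have h1 : L g 0 = 1 := by
      rw [hg]
      exact lp.single_apply_self 2 0 1
    rw [hL] at h1
    simp [hg0] at h1
end
end

section
/- Let K ≥ 1, let v : ℤ → ℝ be a K-periodic real potential and H the discrete Schrödinger operator on ℓ²(ℤ) with potential v. Then the spectrum of H is a union of at most K closed real intervals: there exist a, b : Fin K → ℝ with a(i) ≤ b(i) for all i and b(i) ≤ a(j) whenever i < j, such that spectrum ℂ H equals the image in ℂ of ⋃_{i ∈ Fin K} [a(i), b(i)]. -/
/-!
A solution of the eigenvalue recursion `z (n + 1) = (E - v n) * z n - z (n - 1)` is determined by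
`z 0` and `z 1`. Treating the energy as an indeterminate gives two fundamental solutions
`φ, ψ : ℤ → ℝ[X]`, with `(φ 0, φ 1) = (1, 0)` and `(ψ 0, ψ 1) = (0, 1)`; the monodromy matrix over
one period has determinant `1` (constancy of the Wronskian), and its trace
`Δ = φ K + ψ (K + 1)` is the discriminant, a polynomial of degree `K`. The spectrum of `H` is
`{E : ℝ | Δ(E) ∈ [-2, 2]}`, for the following two reasons.

* For fixed `x`, the functionals `p ↦ (p(H) x) n` on `ℝ[X]` satisfy the recursion in `n` with
  coefficient `X - v n`. The Cayley–Hamilton theorem for the monodromy matrix then gives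
  `Δ(H) = S ^ K + S ^ (-K)`, where `S` is the shift (`magic_formula`). This operator has norm at most
  `2`, and `H` is self-adjoint, so spectral mapping shows that every spectral value `E` is real with
  `|Δ(E)| ≤ 2`.
* If `|Δ(E)| ≤ 2`, the monodromy matrix at `E` has an eigenvalue on the unit circle, hence there is a
  nonzero Floquet solution `u` with `‖u (n + K)‖ = ‖u n‖`. If `H - E` were surjective, there would be
  for every `m` a `g ∈ ℓ²` with `(H - E) g = δ_m`; the Wronskian of `u` and `g` is constant on each
  side of `m`, tends to `0` at `±∞`, and jumps by `u m` at `m`, so `u m = 0`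
  (`bounded_solution_vanishes`), a contradiction.

Finally `Δ'` has at most `K - 1` real roots, and by Rolle's theorem `Δ` is monotone between
consecutive ones, so these roots cut `{|Δ| ≤ 2}` into at most `K` compact intervals
(`isBandUnion_of_polynomial`). Missing pieces are replaced by copies of the right-most point.
-/

noncomputable section

open Polynomial

/-! ### The three-term recursion and the discriminant -/

/-- The recursion can be solved in both directions from prescribed values at `0` and `1`. -/
theorem exists_solution {R : Type*} [CommRing R] (c : ℤ → R) (p q : R) :
    ∃ u : ℤ → R, u 0 = p ∧ u 1 = q ∧ ∀ n, u (n + 1) = c n * u n - u (n - 1) := by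
  -- `F k = (u k, u (k + 1))` runs forward, `G k = (u (-k), u (-k + 1))` runs backward.
  let F : ℕ → R × R := fun n => Nat.rec (p, q)
    (fun k w => (w.2, c (k + 1) * w.2 - w.1)) n
  let G : ℕ → R × R := fun n => Nat.rec (p, q)
    (fun k w => (c (-k) * w.1 - w.2, w.1)) n
  have hF : ∀ k, F (k + 1) = ((F k).2, c (k + 1) * (F k).2 - (F k).1) := fun _ => rfl
  have hG : ∀ k, G (k + 1) = (c (-k) * (G k).1 - (G k).2, (G k).1) := fun _ => rfl
  let u : ℤ → R := fun n => if 0 ≤ n then (F n.toNat).1 else (G (-n).toNat).1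
  have huF : ∀ k : ℕ, u k = (F k).1 := fun k => by simp [u]
  have huG : ∀ k : ℕ, u (-k) = (G k).1 := fun k => by
    rcases Nat.eq_zero_or_pos k with rfl | hk
    · simp [u, F, G]
    · have : ¬ (0 : ℤ) ≤ -k := by omega
      simp only [u, if_neg this]
      simp
  refine ⟨u, huF 0, ?_, ?_⟩
  · have := huF 1
    simpa [F] using this
  · intro n
    obtain ⟨k, rfl | rfl⟩ := n.eq_nat_or_neg
    · cases k with
      | zero =>
        have h1 := huF 1
        have h0 := huF 0
        have hm := huG 1
        simp [F, G] at h1 h0 hm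
        simp [h1, h0, hm]
      | succ k =>
        have e1 : ((k + 1 : ℕ) : ℤ) + 1 = (k + 2 : ℕ) := by push_cast; ring
        have e2 : ((k + 1 : ℕ) : ℤ) - 1 = k := by push_cast; ring
        rw [e1, e2, huF, huF, huF, hF (k + 1), hF k]
        push_cast
        rfl
    · cases k with
      | zero =>
        have h1 := huF 1
        have h0 := huF 0
        have hm := huG 1
        simp [F, G] at h1 h0 hm
        simp [h1, h0, hm]
      | succ k =>
        have e1 : -((k + 1 : ℕ) : ℤ) + 1 = -(k : ℕ) := by push_cast; ring
        have e2 : -((k + 1 : ℕ) : ℤ) - 1 = -(k + 2 : ℕ) := by push_cast; ring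
        rw [e1, e2, huG, huG, huG, hG (k + 1), hG k]
        push_cast
        ring

/-- Uniqueness for the recursion. The coefficients may be arbitrary maps preserving `0`, so that the
values can be scalars, polynomials, or functionals on polynomials. -/
theorem solution_eq_zero {M : Type*} [AddGroup M] (c : ℤ → M → M) (hc : ∀ n, c n 0 = 0)
    (z : ℤ → M) (hz : ∀ n, z (n + 1) = c n (z n) - z (n - 1)) (h0 : z 0 = 0) (h1 : z 1 = 0)
    (n : ℤ) : z n = 0 := by
  suffices h : z n = 0 ∧ z (n + 1) = 0 from h.1
  induction n using Int.induction_on with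
  | zero => exact ⟨h0, by simpa using h1⟩
  | succ i ih =>
    refine ⟨ih.2, ?_⟩
    rw [hz, ih.2, hc, add_sub_cancel_right, ih.1, sub_zero]
  | pred i ih =>
    refine ⟨?_, by simpa using ih.1⟩
    have := hz (-i)
    rw [ih.1, ih.2, hc, zero_sub, zero_eq_neg] at this
    exact this

/-- The transfer matrix from `(0, 1)` to `(n, n + 1)` has determinant `1`. -/
theorem wronskian_eq_one {R : Type*} [CommRing R] (c φ ψ : ℤ → R)
    (hφ : ∀ n, φ (n + 1) = c n * φ n - φ (n - 1)) (hψ : ∀ n, ψ (n + 1) = c n * ψ n - ψ (n - 1))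
    (hφ0 : φ 0 = 1) (hψ0 : ψ 0 = 0) (hψ1 : ψ 1 = 1) (n : ℕ) :
    φ n * ψ (n + 1) - φ (n + 1) * ψ n = 1 := by
  induction n with
  | zero => simp [hφ0, hψ0, hψ1]
  | succ k ih =>
    have h1 := hφ (k + 1)
    have h2 := hψ (k + 1)
    simp only [add_sub_cancel_right] at h1 h2
    push_cast
    rw [h1, h2]
    linear_combination ih

theorem natDegree_phi_le (v : ℤ → ℝ) (φ : ℤ → ℝ[X])
    (hφ : ∀ n, φ (n + 1) = (X - C (v n)) * φ n - φ (n - 1)) (h0 : φ 0 = 1) (h1 : φ 1 = 0)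
    (n : ℕ) : (φ n).natDegree ≤ n - 1 ∧ (φ (n + 1)).natDegree ≤ n := by
  induction n with
  | zero => simp [h0, h1]
  | succ k ih =>
    have h := hφ (k + 1)
    simp only [add_sub_cancel_right] at h
    push_cast
    refine ⟨by simpa using ih.2, ?_⟩
    rw [h]
    refine (natDegree_sub_le _ _).trans (max_le ?_ (by omega))
    refine natDegree_mul_le.trans ?_
    rw [natDegree_X_sub_C]
    omega

theorem degree_psi (v : ℤ → ℝ) (ψ : ℤ → ℝ[X])
    (hψ : ∀ n, ψ (n + 1) = (X - C (v n)) * ψ n - ψ (n - 1)) (h0 : ψ 0 = 0) (h1 : ψ 1 = 1)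
    (n : ℕ) : (ψ n).degree < n ∧ (ψ (n + 1)).Monic ∧ (ψ (n + 1)).degree = n := by
  induction n with
  | zero => simp [h0, h1]
  | succ k ih =>
    obtain ⟨ih1, ih2, ih3⟩ := ih
    have h := hψ (k + 1)
    simp only [add_sub_cancel_right] at h
    have hd : ((X - C (v (k + 1))) * ψ (k + 1)).degree = ((k + 1 : ℕ) : WithBot ℕ) := by
      rw [degree_mul, degree_X_sub_C, ih3]
      push_cast
      rw [add_comm]
    have hlt : (ψ k).degree < ((X - C (v (k + 1))) * ψ (k + 1)).degree := by
      rw [hd]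
      exact ih1.trans (by exact_mod_cast k.lt_succ_self)
    push_cast at hd ⊢
    refine ⟨?_, ?_, ?_⟩
    · rw [ih3]; exact_mod_cast k.lt_succ_self
    · rw [h]
      exact ((monic_X_sub_C _).mul ih2).sub_of_left hlt
    · rw [h, degree_sub_eq_left_of_degree_lt hlt, hd]

theorem natDegree_discriminant (K : ℕ) (hK : 1 ≤ K) (v : ℤ → ℝ) (φ ψ : ℤ → ℝ[X])
    (hφ : ∀ n, φ (n + 1) = (X - C (v n)) * φ n - φ (n - 1))
    (hψ : ∀ n, ψ (n + 1) = (X - C (v n)) * ψ n - ψ (n - 1))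
    (hφ0 : φ 0 = 1) (hφ1 : φ 1 = 0) (hψ0 : ψ 0 = 0) (hψ1 : ψ 1 = 1) :
    (φ K + ψ (K + 1)).natDegree = K := by
  have h1 := (natDegree_phi_le v φ hφ hφ0 hφ1 K).1
  have h2 := natDegree_eq_of_degree_eq_some (degree_psi v ψ hψ hψ0 hψ1 K).2.2
  rw [natDegree_add_eq_right_of_natDegree_lt (by omega), h2]

/-- Functionals on `ℝ[X]` obeying the recursion, with `X` acting by precomposition, are combinations
of the fundamental solutions. -/
theorem solution_expansion (v : ℤ → ℝ) (φ ψ : ℤ → ℝ[X])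
    (hφ : ∀ n, φ (n + 1) = (X - C (v n)) * φ n - φ (n - 1))
    (hψ : ∀ n, ψ (n + 1) = (X - C (v n)) * ψ n - ψ (n - 1))
    (hφ0 : φ 0 = 1) (hφ1 : φ 1 = 0) (hψ0 : ψ 0 = 0) (hψ1 : ψ 1 = 1)
    (w : ℤ → ℝ[X] →+ ℂ)
    (hw : ∀ n p, w (n + 1) p = w n ((X - C (v n)) * p) - w (n - 1) p) (n : ℤ) (p : ℝ[X]) :
    w n p = w 0 (φ n * p) + w 1 (ψ n * p) := by
  have := solution_eq_zero (M := ℝ[X] → ℂ) (fun n f p => f ((X - C (v n)) * p)) (fun _ => rfl)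
    (fun n p => w n p - (w 0 (φ n * p) + w 1 (ψ n * p))) ?_ ?_ ?_ n
  · exact sub_eq_zero.1 (congrFun this p)
  · intro n
    funext p
    simp only [Pi.sub_apply]
    have eφ : φ (n + 1) * p = φ n * ((X - C (v n)) * p) - φ (n - 1) * p := by rw [hφ]; ring
    have eψ : ψ (n + 1) * p = ψ n * ((X - C (v n)) * p) - ψ (n - 1) * p := by rw [hψ]; ring
    rw [hw, eφ, eψ, map_sub (w 0), map_sub (w 1)]
    ring
  · funext p; simp [hφ0, hψ0]
  · funext p; simp [hφ1, hψ1]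

/-- For functionals on `ℝ[X]` obeying the recursion, multiplication by the discriminant acts as the
sum of the shifts by `K` and `-K`: this is the Cayley–Hamilton identity `M² - tr(M) M + 1 = 0` for the
monodromy matrix `M`. -/
theorem magic_formula (K : ℕ) (v : ℤ → ℝ) (hper : ∀ n : ℤ, v (n + (K : ℤ)) = v n)
    (φ ψ : ℤ → ℝ[X])
    (hφ : ∀ n, φ (n + 1) = (X - C (v n)) * φ n - φ (n - 1))
    (hψ : ∀ n, ψ (n + 1) = (X - C (v n)) * ψ n - ψ (n - 1))
    (hφ0 : φ 0 = 1) (hφ1 : φ 1 = 0) (hψ0 : ψ 0 = 0) (hψ1 : ψ 1 = 1)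
    (w : ℤ → ℝ[X] →+ ℂ)
    (hw : ∀ n p, w (n + 1) p = w n ((X - C (v n)) * p) - w (n - 1) p) (n : ℤ) (p : ℝ[X]) :
    w n ((φ K + ψ (K + 1)) * p) = w (n + K) p + w (n - K) p := by
  have hdet := wronskian_eq_one (fun n => X - C (v n)) φ ψ hφ hψ hφ0 hψ0 hψ1 K
  have exp0 := solution_expansion v φ ψ hφ hψ hφ0 hφ1 hψ0 hψ1 w hw
  have hwK : ∀ n p, w (n + 1 + K) p = w (n + K) ((X - C (v n)) * p) - w (n - 1 + K) p := by
    intro n p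
    have := hw (n + K) p
    rw [hper] at this
    convert this using 3 <;> ring_nf
  have expK := solution_expansion v φ ψ hφ hψ hφ0 hφ1 hψ0 hψ1 (fun n => w (n + K)) hwK
  simp only [zero_add] at expK
  have e1 : ∀ r, w (1 + K) r = w 0 (φ (K + 1) * r) + w 1 (ψ (K + 1) * r) := by
    intro r; rw [add_comm]; exact exp0 _ _
  -- The left-hand side solves the recursion in `n`, so only `n = 0` and `n = 1` have to be checked.
  have key : ∀ n p, w (n + K + K) p - w (n + K) ((φ K + ψ (K + 1)) * p) + w n p = 0 := by
    intro n p
    have := solution_eq_zero (M := ℝ[X] → ℂ) (fun n f p => f ((X - C (v n)) * p)) (fun _ => rfl)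
      (fun n p => w (n + K + K) p - w (n + K) ((φ K + ψ (K + 1)) * p) + w n p) ?_ ?_ ?_ n
    · exact congrFun this p
    · intro n
      funext p
      simp only [Pi.sub_apply]
      have h2 := hwK (n + K) p
      rw [hper] at h2
      have h3 : n + 1 + (K : ℤ) + K = n + K + 1 + K := by ring
      have h4 : n - 1 + (K : ℤ) + K = n + K - 1 + K := by ring
      rw [h3, h4, h2, hwK, hw, mul_left_comm]
      ring
    · funext p
      simp only [zero_add, Pi.zero_apply]
      rw [expK, exp0 K, e1, exp0 K]
      have hA : φ K * (φ K * p) + φ (K + 1) * (ψ K * p) - φ K * ((φ K + ψ (K + 1)) * p) + p = 0 := by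
        linear_combination -p * hdet
      have hB : ψ K * (φ K * p) + ψ (K + 1) * (ψ K * p) - ψ K * ((φ K + ψ (K + 1)) * p) = 0 := by
        ring
      replace hA := congrArg (w 0) hA
      replace hB := congrArg (w 1) hB
      rw [map_add (w 0), map_sub (w 0), map_add (w 0), map_zero] at hA
      rw [map_sub (w 1), map_add (w 1), map_zero] at hB
      linear_combination hA + hB
    · funext p
      simp only [Pi.zero_apply]
      rw [expK (1 + K), exp0 K, e1, e1, add_comm 1 (K : ℤ)]
      have hA : φ K * (φ (K + 1) * p) + φ (K + 1) * (ψ (K + 1) * p)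
          - φ (K + 1) * ((φ K + ψ (K + 1)) * p) = 0 := by ring
      have hB : ψ K * (φ (K + 1) * p) + ψ (K + 1) * (ψ (K + 1) * p)
          - ψ (K + 1) * ((φ K + ψ (K + 1)) * p) + p = 0 := by
        linear_combination -p * hdet
      replace hA := congrArg (w 0) hA
      replace hB := congrArg (w 1) hB
      rw [map_sub (w 0), map_add (w 0), map_zero] at hA
      rw [map_add (w 1), map_sub (w 1), map_add (w 1), map_zero] at hB
      linear_combination hA + hB
  have := key (n - K) p
  simp only [sub_add_cancel] at this
  linear_combination -this

/-! ### Unions of bands and polynomial preimages of `[-2, 2]` -/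

/-- `S` is the union of `n` compact intervals listed from left to right; consecutive intervals may
share an end point, and an interval may be a single point. -/
def IsBandUnion (n : ℕ) (S : Set ℝ) : Prop :=
  ∃ a b : Fin n → ℝ, (∀ i, a i ≤ b i) ∧ (∀ i j, i < j → b i ≤ a j) ∧ S = ⋃ i, Set.Icc (a i) (b i)

theorem IsBandUnion.append {n : ℕ} {S : Set ℝ} (h : IsBandUnion n S) {c d : ℝ} (hcd : c ≤ d)
    (hS : ∀ x ∈ S, x ≤ c) : IsBandUnion (n + 1) (S ∪ Set.Icc c d) := by
  obtain ⟨a, b, hab, hlt, rfl⟩ := h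
  refine ⟨Fin.snoc (α := fun _ => ℝ) a c, Fin.snoc (α := fun _ => ℝ) b d, ?_, ?_, ?_⟩
  · intro i
    induction i using Fin.lastCases with
    | last => simpa using hcd
    | cast i => simpa using hab i
  · intro i j hij
    induction j using Fin.lastCases with
    | last =>
      induction i using Fin.lastCases with
      | last => exact absurd hij (lt_irrefl _)
      | cast i =>
        simpa using hS (b i) (Set.mem_iUnion.2 ⟨i, hab i, le_rfl⟩)
    | cast j =>
      induction i using Fin.lastCases with
      | last => exact absurd hij (not_lt.2 (Fin.le_last _))
      | cast i => simpa using hlt i j (by simpa using hij)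
  · ext x
    simp only [Set.mem_union, Set.mem_iUnion]
    constructor
    · rintro (⟨i, hi⟩ | h)
      · exact ⟨i.castSucc, by simpa using hi⟩
      · exact ⟨Fin.last n, by simpa using h⟩
    · rintro ⟨i, hi⟩
      induction i using Fin.lastCases with
      | last => exact Or.inr (by simpa using hi)
      | cast i => exact Or.inl ⟨i, by simpa using hi⟩

/-- The maximum of `S` is added as a degenerate last interval. -/
theorem IsBandUnion.pad {n : ℕ} {S : Set ℝ} (h : IsBandUnion n S) (hc : IsCompact S)
    (hne : S.Nonempty) : IsBandUnion (n + 1) S := by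
  have := h.append (c := sSup S) (d := sSup S) le_rfl fun x hx => le_csSup hc.bddAbove hx
  rwa [Set.Icc_self, Set.union_eq_self_of_subset_right] at this
  exact Set.singleton_subset_iff.2 (hc.sSup_mem hne)

theorem eq_Icc_of_compact {S : Set ℝ} (hc : IsCompact S) (hne : S.Nonempty)
    (h : ∀ x ∈ S, ∀ y ∈ S, Set.Icc x y ⊆ S) : S = Set.Icc (sInf S) (sSup S) :=
  Set.Subset.antisymm (fun _ hx => ⟨csInf_le hc.bddBelow hx, le_csSup hc.bddAbove hx⟩)
    (h _ (hc.sInf_mem hne) _ (hc.sSup_mem hne))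

/-- A compact set that contains the segment between any two of its points not separated by the finite
set `T` is a union of `T.card + 1` intervals, or more if padded. -/
theorem isBandUnion_of_cuts (n : ℕ) : ∀ (T : Finset ℝ) (_ : T.card ≤ n) (S : Set ℝ)
    (_ : IsCompact S) (_ : S.Nonempty)
    (_ : ∀ x ∈ S, ∀ y ∈ S, (∀ t ∈ T, ¬ (x < t ∧ t < y)) → Set.Icc x y ⊆ S),
    IsBandUnion (n + 1) S := by
  induction n with
  | zero =>
    intro T hT S hc hne h
    obtain rfl : T = ∅ := by simpa using hT
    have hI := eq_Icc_of_compact hc hne fun x hx y hy => h x hx y hy (by simp)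
    have h0 : IsBandUnion 0 ∅ := ⟨Fin.elim0, Fin.elim0, by simp, by simp, by simp⟩
    have := h0.append (c := sInf S) (d := sSup S)
      (csInf_le hc.bddBelow (hc.sSup_mem hne)) (by simp)
    rwa [Set.empty_union, ← hI] at this
  | succ n ih =>
    intro T hT S hc hne h
    rcases T.eq_empty_or_nonempty with rfl | hTne
    · exact (ih ∅ (by simp) S hc hne h).pad hc hne
    -- Right of the largest cut `c` the set is one interval; left of it, `T.erase c` does the cutting.
    set c := T.max' hTne with hcdef
    have hcard : (T.erase c).card ≤ n := by
      rw [Finset.card_erase_of_mem (T.max'_mem hTne)]; omega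
    rcases (S ∩ Set.Iic c).eq_empty_or_nonempty with h1 | h1
    · have hgt : ∀ x ∈ S, c < x := fun x hx => by
        by_contra hlt
        exact (Set.eq_empty_iff_forall_notMem.1 h1 x) ⟨hx, not_lt.1 hlt⟩
      refine (ih ∅ (by simp) S hc hne fun x hx y hy _ => h x hx y hy ?_).pad hc hne
      intro t ht hxt
      exact absurd (T.le_max' t ht) (not_le.2 ((hgt x hx).trans hxt.1))
    rcases (S ∩ Set.Ici c).eq_empty_or_nonempty with h2 | h2
    · have hlt : ∀ x ∈ S, x < c := fun x hx => by
        by_contra hlt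
        exact (Set.eq_empty_iff_forall_notMem.1 h2 x) ⟨hx, not_lt.1 hlt⟩
      refine (ih (T.erase c) hcard S hc hne fun x hx y hy hT' => h x hx y hy ?_).pad hc hne
      intro t ht hxt
      exact hT' t (Finset.mem_erase.2 ⟨(hxt.2.trans (hlt y hy)).ne, ht⟩) hxt
    have hc1 : IsCompact (S ∩ Set.Iic c) := hc.inter_right isClosed_Iic
    have hc2 : IsCompact (S ∩ Set.Ici c) := hc.inter_right isClosed_Ici
    have hI := eq_Icc_of_compact hc2 h2 fun x hx y hy z hz =>
      ⟨h x hx.1 y hy.1 (fun t ht hxt =>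
        absurd (T.le_max' t ht) (not_le.2 (lt_of_le_of_lt hx.2 hxt.1))) hz, le_trans hx.2 hz.1⟩
    have hS1 := ih (T.erase c) hcard (S ∩ Set.Iic c) hc1 h1 fun x hx y hy hT' z hz =>
      ⟨h x hx.1 y hy.1 (fun t ht hxt =>
        hT' t (Finset.mem_erase.2 ⟨(lt_of_lt_of_le hxt.2 hy.2).ne, ht⟩) hxt) hz, hz.2.trans hy.2⟩
    have := hS1.append (c := sInf (S ∩ Set.Ici c)) (d := sSup (S ∩ Set.Ici c))
      (csInf_le hc2.bddBelow (hc2.sSup_mem h2))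
      (fun x hx => le_trans hx.2 (hc2.sInf_mem h2).2)
    rwa [← hI, ← Set.inter_union_distrib_left, Set.Iic_union_Ici, Set.inter_univ] at this

theorem isBandUnion_of_polynomial (K : ℕ) (hK : 1 ≤ K) (D : ℝ[X]) (hD : D.natDegree = K)
    (S : Set ℝ) (hS : ∀ t, t ∈ S ↔ D.eval t ∈ Set.Icc (-2) 2) (hc : IsCompact S)
    (hne : S.Nonempty) : IsBandUnion K S := by
  have hD' : derivative D ≠ 0 := fun h0 => by
    have := derivative_eq_zero.1 h0
    omega
  have hcard : (derivative D).roots.toFinset.card ≤ K - 1 :=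
    (Multiset.toFinset_card_le _).trans ((card_roots' _).trans
      (hD ▸ natDegree_derivative_le D))
  have := isBandUnion_of_cuts (K - 1) _ hcard S hc hne ?_
  · rwa [Nat.sub_add_cancel hK] at this
  intro x hx y hy hT z hz
  have hxy : x ≤ y := hz.1.trans hz.2
  have hinj : Set.InjOn (fun t => D.eval t) (Set.Icc x y) := by
    intro s hs t ht hst
    by_contra hne
    wlog hlt : s < t generalizing s t
    · exact this ht hs hst.symm (Ne.symm hne) (lt_of_le_of_ne (not_lt.1 hlt) (Ne.symm hne))
    obtain ⟨r, hr, hr0⟩ := exists_deriv_eq_zero hlt D.continuous.continuousOn hst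
    rw [Polynomial.deriv] at hr0
    exact hT r (by simp [hD', hr0]) ⟨hs.1.trans_lt hr.1, hr.2.trans_le ht.2⟩
  rw [hS] at hx hy ⊢
  rcases ContinuousOn.strictMonoOn_of_injOn_Icc' hxy D.continuous.continuousOn hinj with hm | hm
  · exact ⟨hx.1.trans (hm.monotoneOn ⟨le_rfl, hxy⟩ hz hz.1),
      (hm.monotoneOn hz ⟨hxy, le_rfl⟩ hz.2).trans hy.2⟩
  · exact ⟨hy.1.trans (hm.antitoneOn hz ⟨hxy, le_rfl⟩ hz.2),
      (hm.antitoneOn ⟨le_rfl, hxy⟩ hz hz.1).trans hx.2⟩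

/-! ### The operator on `ℓ²` -/

local notation "ℓ²" => lp (fun _ : ℤ => ℂ) 2

theorem exists_shift (k : ℤ) (x : ℓ²) : ∃ y : ℓ², ∀ n, y n = x (n + k) := by
  refine ⟨⟨fun n => x (n + k), ?_⟩, fun _ => rfl⟩
  have hx := lp.memℓp x
  refine (memℓp_gen_iff (by norm_num)).2 ?_
  exact ((Equiv.addRight k).summable_iff).2 (hx.summable (by norm_num))

/-- The adjoint of the shift by `k` is the shift by `-k`. -/
theorem inner_shift (k : ℤ) (x y x' y' : ℓ²) (hx : ∀ n, x' n = x (n + k))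
    (hy : ∀ n, y' n = y (n - k)) : inner ℂ x' y = inner ℂ x y' := by
  rw [lp.inner_eq_tsum, lp.inner_eq_tsum, ← (Equiv.addRight k).tsum_eq fun n => inner ℂ (x n) (y' n)]
  simp [hx, hy]

theorem norm_shift_s8 (k : ℤ) (x y : ℓ²) (hy : ∀ n, y n = x (n + k)) : ‖y‖ = ‖x‖ := by
  have h : inner ℂ y y = inner ℂ x x := inner_shift k x y y x hy fun n => by simp [hy]
  rw [inner_self_eq_norm_sq_to_K, inner_self_eq_norm_sq_to_K] at h
  have h2 : ‖y‖ ^ 2 = ‖x‖ ^ 2 := by exact_mod_cast h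
  exact (sq_eq_sq₀ (norm_nonneg _) (norm_nonneg _)).1 h2

/-- Square-summable sequences decay at infinity in both directions. -/
theorem tendsto_cofinite (x : ℓ²) : Filter.Tendsto (fun n => ‖x n‖) Filter.cofinite (nhds 0) := by
  have h := ((lp.memℓp x).summable (by norm_num)).tendsto_cofinite_zero
  have h2 := h.sqrt
  simpa using h2

/-- `H` minus the two shifts is multiplication by the real potential, and the shifts are adjoint to
each other. -/
theorem isSelfAdjoint_schrodinger (v : ℤ → ℝ) (H : ℓ² →L[ℂ] ℓ²)
    (hH : ∀ x : ℓ², ∀ n : ℤ, H x n = x (n + 1) + x (n - 1) + (v n : ℂ) * x n) :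
    IsSelfAdjoint H := by
  rw [ContinuousLinearMap.isSelfAdjoint_iff_isSymmetric]
  intro x y
  obtain ⟨xp, hxp⟩ := exists_shift 1 x
  obtain ⟨xm, hxm⟩ := exists_shift (-1) x
  obtain ⟨yp, hyp⟩ := exists_shift 1 y
  obtain ⟨ym, hym⟩ := exists_shift (-1) y
  have hV : inner ℂ (H x - xp - xm) y = inner ℂ x (H y - yp - ym) := by
    rw [lp.inner_eq_tsum, lp.inner_eq_tsum]
    refine tsum_congr fun n => ?_
    have e1 : (H x - xp - xm) n = v n * x n := by
      simp only [lp.coeFn_sub, Pi.sub_apply, hH, hxp, hxm]; ring_nf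
    have e2 : (H y - yp - ym) n = v n * y n := by
      simp only [lp.coeFn_sub, Pi.sub_apply, hH, hyp, hym]; ring_nf
    rw [e1, e2]
    simp
    ring
  have h1 := inner_shift 1 x y xp ym hxp (fun n => by rw [hym]; rfl)
  have h2 := inner_shift (-1) x y xm yp hxm (fun n => by rw [hyp]; simp)
  rw [inner_sub_left, inner_sub_left, inner_sub_right, inner_sub_right] at hV
  change inner ℂ (H x) y = inner ℂ x (H y)
  linear_combination hV + h1 + h2

theorem norm_discriminant_le (K : ℕ) (D : ℂ[X]) (H : ℓ² →L[ℂ] ℓ²)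
    (hD : ∀ x : ℓ², ∀ n : ℤ, aeval H D x n = x (n + K) + x (n - K)) :
    ‖aeval H D‖ ≤ 2 := by
  refine ContinuousLinearMap.opNorm_le_bound _ (by norm_num) fun x => ?_
  obtain ⟨xp, hxp⟩ := exists_shift K x
  obtain ⟨xm, hxm⟩ := exists_shift (-K) x
  have : aeval H D x = xp + xm := by
    ext n
    rw [hD, lp.coeFn_add, Pi.add_apply, hxp, hxm]; rfl
  rw [this, two_mul]
  refine (norm_add_le _ _).trans (le_of_eq ?_)
  rw [norm_shift_s8 _ _ _ hxp, norm_shift_s8 _ _ _ hxm]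

/-- If `g` is a decaying solution of `(H - E) g = δ_m`, every Floquet solution `u` with a multiplier
of modulus one vanishes at `m`. -/
theorem bounded_solution_vanishes (K : ℕ) (hK : 1 ≤ K) (v : ℤ → ℝ) (E ζ : ℂ) (hζ : ‖ζ‖ = 1)
    (u g : ℤ → ℂ) (hu : ∀ n, u (n + 1) = (E - v n) * u n - u (n - 1))
    (huK : ∀ n, u (n + K) = ζ * u n) (m : ℤ)
    (hg : ∀ n, g (n + 1) + g (n - 1) + v n * g n - E * g n = (Pi.single m 1 : ℤ → ℂ) n)
    (hg0 : Filter.Tendsto (fun n => ‖g n‖) Filter.cofinite (nhds 0)) : u m = 0 := by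
  -- The Wronskian of `u` and `g` only changes at `m`, where it jumps by `u m`.
  set W : ℤ → ℂ := fun n => u (n + 1) * g n - u n * g (n + 1) with hW
  have hstep : ∀ n, W n = W (n - 1) - u n * (Pi.single m 1 : ℤ → ℂ) n := by
    intro n
    simp only [hW, sub_add_cancel]
    rw [← hg n, hu n]
    ring
  have hright : ∀ j : ℕ, W (m + j) = W m := by
    intro j
    induction j with
    | zero => simp
    | succ j ih =>
      have hne : m + (j : ℤ) + 1 ≠ m := by omega
      have := hstep (m + j + 1)
      rw [Pi.single_eq_of_ne hne, mul_zero, sub_zero, add_sub_cancel_right, ih] at this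
      push_cast
      rwa [← add_assoc]
  have hleft : ∀ j : ℕ, W (m - 1 - j) = W (m - 1) := by
    intro j
    induction j with
    | zero => simp
    | succ j ih =>
      have hne : m - 1 - (j : ℤ) ≠ m := by omega
      have := hstep (m - 1 - j)
      rw [Pi.single_eq_of_ne hne, mul_zero, sub_zero, ih] at this
      push_cast
      rw [this]; ring_nf
  have hnorm : ∀ n, ‖u (n + K)‖ = ‖u n‖ := fun n => by rw [huK, norm_mul, hζ, one_mul]
  have hnormp : ∀ (j : ℕ) n, ‖u (n + (j * K : ℕ))‖ = ‖u n‖ := by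
    intro j
    induction j with
    | zero => simp
    | succ j ih =>
      intro n
      rw [← ih n, ← hnorm (n + (j * K : ℕ))]
      push_cast; ring_nf
  have hnormm : ∀ (j : ℕ) n, ‖u (n - (j * K : ℕ))‖ = ‖u n‖ := fun j n => by
    rw [← hnormp j (n - (j * K : ℕ)), sub_add_cancel]
  -- `s` enumerates a sequence of sites, a whole number of periods away from `n`, escaping to infinity.
  have hlim : ∀ (n : ℤ) (s : ℕ → ℤ), Function.Injective s → (∀ j, ‖u (s j)‖ = ‖u n‖) →
      (∀ j, ‖u (s j + 1)‖ = ‖u (n + 1)‖) → (∀ j, W (s j) = W n) → W n = 0 := by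
    intro n s hs h0 h1 hWs
    have t0 := hg0.comp hs.tendsto_cofinite
    have t1 := hg0.comp ((add_left_injective (1 : ℤ)).comp hs).tendsto_cofinite
    rw [Nat.cofinite_eq_atTop] at t0 t1
    have t := (t0.const_mul ‖u (n + 1)‖).add (t1.const_mul ‖u n‖)
    rw [mul_zero, mul_zero, add_zero] at t
    have := ge_of_tendsto' t (b := ‖W n‖) fun j => by
      rw [← hWs j, ← h0 j, ← h1 j]
      simp only [hW, Function.comp]
      refine (norm_sub_le _ _).trans ?_
      rw [norm_mul, norm_mul]
    simpa using this
  have hr : W m = 0 := hlim m (fun j => m + (j * K : ℕ)) (fun i j h => by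
      have : i * K = j * K := by exact_mod_cast add_left_cancel h
      exact Nat.eq_of_mul_eq_mul_right hK this) (fun j => hnormp j m)
      (fun j => by rw [add_right_comm]; exact hnormp j _) (fun j => hright _)
  have hl : W (m - 1) = 0 := hlim (m - 1) (fun j => m - 1 - (j * K : ℕ)) (fun i j h => by
      have : i * K = j * K := by exact_mod_cast sub_right_injective h
      exact Nat.eq_of_mul_eq_mul_right hK this) (fun j => hnormm j _)
      (fun j => by rw [sub_add_eq_add_sub]; exact hnormm j _) (fun j => hleft _)
  have := hstep m
  simpa [hr, hl] using this

/-- A real matrix of determinant `1` and trace in `[-2, 2]` has an eigenvalue on the unit circle. -/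
theorem exists_floquet_vector (α β γ δ : ℝ) (hdet : α * δ - γ * β = 1)
    (htr : α + δ ∈ Set.Icc (-2) 2) :
    ∃ ζ p q : ℂ, ‖ζ‖ = 1 ∧ ¬ (p = 0 ∧ q = 0) ∧ α * p + β * q = ζ * p ∧ γ * p + δ * q = ζ * q := by
  set t := α + δ with ht
  have ht2 : 0 ≤ 1 - (t / 2) ^ 2 := by nlinarith [htr.1, htr.2]
  set s := Real.sqrt (1 - (t / 2) ^ 2) with hs
  have hs2 : s ^ 2 = 1 - (t / 2) ^ 2 := Real.sq_sqrt ht2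
  -- the root of `ζ ^ 2 - t ζ + 1` in the closed upper half-plane
  set ζ : ℂ := ⟨t / 2, s⟩ with hζ
  have hnorm : ‖ζ‖ = 1 := by
    rw [← sq_eq_sq₀ (norm_nonneg _) zero_le_one, ← Complex.normSq_eq_norm_sq, Complex.normSq_apply]
    simp only [hζ]
    linear_combination hs2
  have hchar : ζ ^ 2 - t * ζ + 1 = 0 := by
    apply Complex.ext
    · simp [hζ, pow_two]; linear_combination -hs2
    · simp [hζ, pow_two]; ring
  have hdetC : (α : ℂ) * δ - γ * β = 1 := by exact_mod_cast hdet
  have htC : (t : ℂ) = α + δ := by rw [ht]; push_cast; rfl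
  obtain ⟨w, hw, hMw⟩ := Matrix.exists_mulVec_eq_zero_iff
    (M := !![(α : ℂ) - ζ, (β : ℂ); (γ : ℂ), (δ : ℂ) - ζ]) |>.2 (by
      rw [Matrix.det_fin_two_of]
      rw [htC] at hchar
      linear_combination hchar + hdetC)
  refine ⟨ζ, w 0, w 1, hnorm, fun h => hw ?_, ?_, ?_⟩
  · ext i; fin_cases i
    · exact h.1
    · exact h.2
  · have := congrFun hMw 0
    simp [Matrix.mulVec, dotProduct, Fin.sum_univ_two] at this
    linear_combination this
  · have := congrFun hMw 1
    simp [Matrix.mulVec, dotProduct, Fin.sum_univ_two] at this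
    linear_combination this

/-- `H - E` is not surjective when `Δ(E) ∈ [-2, 2]`, because a Floquet solution exists. -/
theorem mem_spectrum_of_discriminant (K : ℕ) (hK : 1 ≤ K) (v : ℤ → ℝ)
    (hper : ∀ n : ℤ, v (n + (K : ℤ)) = v n) (H : ℓ² →L[ℂ] ℓ²)
    (hH : ∀ x : ℓ², ∀ n : ℤ, H x n = x (n + 1) + x (n - 1) + (v n : ℂ) * x n)
    (φ ψ : ℤ → ℝ[X])
    (hφ : ∀ n, φ (n + 1) = (X - C (v n)) * φ n - φ (n - 1))
    (hψ : ∀ n, ψ (n + 1) = (X - C (v n)) * ψ n - ψ (n - 1))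
    (hφ0 : φ 0 = 1) (hφ1 : φ 1 = 0) (hψ0 : ψ 0 = 0) (hψ1 : ψ 1 = 1) (E : ℝ)
    (hE : (φ K + ψ (K + 1)).eval E ∈ Set.Icc (-2) 2) : (E : ℂ) ∈ spectrum ℂ H := by
  have hdet := congrArg (eval E)
    (wronskian_eq_one (fun n => X - C (v n)) φ ψ hφ hψ hφ0 hψ0 hψ1 K)
  rw [eval_sub, eval_mul, eval_mul, eval_one] at hdet
  rw [eval_add] at hE
  obtain ⟨ζ, p, q, hζ, hpq, h0, h1⟩ := exists_floquet_vector _ _ _ _ hdet hE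
  set u : ℤ → ℂ := fun n => ((eval E (φ n) : ℝ) : ℂ) * p + ((eval E (ψ n) : ℝ) : ℂ) * q with hu
  have hrec : ∀ n, u (n + 1) = ((E : ℂ) - v n) * u n - u (n - 1) := by
    intro n
    simp only [hu, hφ, hψ, eval_sub, eval_mul, eval_X, eval_C]
    push_cast
    ring
  have hu0 : u 0 = p := by simp [hu, hφ0, hψ0]
  have hu1 : u 1 = q := by simp [hu, hφ1, hψ1]
  have huK : ∀ n, u (n + K) = ζ * u n := by
    intro n
    have := solution_eq_zero (fun n (z : ℂ) => ((E : ℂ) - v n) * z) (by simp)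
      (fun n => u (n + K) - ζ * u n) ?_ ?_ ?_ n
    · exact sub_eq_zero.1 this
    · intro n
      have h2 := hrec (n + K)
      rw [hper] at h2
      have e1 : n + 1 + (K : ℤ) = n + K + 1 := by ring
      have e2 : n - 1 + (K : ℤ) = n + K - 1 := by ring
      simp only [e1, e2, h2, hrec n]
      ring
    · simp only [zero_add, hu0]
      rw [sub_eq_zero]; exact h0
    · simp only [hu1]
      rw [sub_eq_zero, add_comm]; exact h1
  by_contra hns
  rw [spectrum.mem_iff, not_not] at hns
  obtain ⟨R, hR⟩ := hns.exists_right_inv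
  have hzero : ∀ m, u m = 0 := by
    intro m
    set g : ℓ² := -R (lp.single 2 m (1 : ℂ)) with hg
    refine bounded_solution_vanishes K hK v E ζ hζ u g hrec huK m (fun n => ?_) (tendsto_cofinite g)
    have h2 := congrArg (fun A : ℓ² →L[ℂ] ℓ² => A (lp.single 2 m (1 : ℂ)) n) hR
    simp only [mul_apply_eq_comp, one_apply_eq_self,
      sub_apply, Algebra.algebraMap_eq_smul_one,
      smul_apply, lp.coeFn_sub, lp.coeFn_smul, Pi.sub_apply, Pi.smul_apply,
      hH, smul_eq_mul, lp.coeFn_single] at h2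
    rw [← h2]
    simp only [hg, lp.coeFn_neg, Pi.neg_apply]
    ring
  exact hpq ⟨hu0 ▸ hzero 0, hu1 ▸ hzero 1⟩

/-- Spectral mapping for `Δ(H) = S ^ K + S ^ (-K)`. -/
theorem discriminant_mem_of_mem_spectrum (K : ℕ) (v : ℤ → ℝ)
    (hper : ∀ n : ℤ, v (n + (K : ℤ)) = v n) (H : ℓ² →L[ℂ] ℓ²)
    (hH : ∀ x : ℓ², ∀ n : ℤ, H x n = x (n + 1) + x (n - 1) + (v n : ℂ) * x n)
    (φ ψ : ℤ → ℝ[X])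
    (hφ : ∀ n, φ (n + 1) = (X - C (v n)) * φ n - φ (n - 1))
    (hψ : ∀ n, ψ (n + 1) = (X - C (v n)) * ψ n - ψ (n - 1))
    (hφ0 : φ 0 = 1) (hφ1 : φ 1 = 0) (hψ0 : ψ 0 = 0) (hψ1 : ψ 1 = 1) (E : ℝ)
    (hE : (E : ℂ) ∈ spectrum ℂ H) : (φ K + ψ (K + 1)).eval E ∈ Set.Icc (-2) 2 := by
  set ρ : ℝ[X] →+* (ℓ² →L[ℂ] ℓ²) :=
    ((aeval H : ℂ[X] →ₐ[ℂ] _) : ℂ[X] →+* _).comp (mapRingHom (algebraMap ℝ ℂ)) with hρ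
  have hρa : ∀ p, ρ p = aeval H (p.map (algebraMap ℝ ℂ)) := fun _ => rfl
  have hρX : ∀ n, ρ (X - C (v n)) = H - (v n : ℂ) • 1 := by
    intro n
    simp [hρa, Algebra.algebraMap_eq_smul_one]
  set D := φ K + ψ (K + 1) with hD
  have hmagic : ∀ x : ℓ², ∀ n : ℤ,
      aeval H (D.map (algebraMap ℝ ℂ)) x n = x (n + K) + x (n - K) := by
    intro x n
    let w : ℤ → ℝ[X] →+ ℂ := fun n =>
      { toFun := fun p => ρ p x n
        map_zero' := by simp
        map_add' := fun p q => by
          rw [map_add, add_apply, lp.coeFn_add, Pi.add_apply] }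
    have hwd : ∀ n p, w n p = ρ p x n := fun _ _ => rfl
    have := magic_formula K v hper φ ψ hφ hψ hφ0 hφ1 hψ0 hψ1 w (fun n p => by
      simp only [hwd, map_mul, hρX, mul_apply_eq_comp, sub_apply,
        smul_apply, one_apply_eq_self, lp.coeFn_sub,
        lp.coeFn_smul, Pi.sub_apply, Pi.smul_apply, hH, smul_eq_mul]
      ring) n 1
    rw [← hρa]
    simpa only [hwd, map_one, mul_one, one_apply_eq_self] using this
  have hmem := spectrum.subset_polynomial_aeval H (D.map (algebraMap ℝ ℂ)) ⟨_, hE, rfl⟩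
  have hle := (spectrum.norm_le_norm_mul_of_mem hmem).trans
    (mul_le_mul (norm_discriminant_le K _ H hmagic) ContinuousLinearMap.norm_id_le
      (norm_nonneg _) (by norm_num))
  have hev : eval (E : ℂ) (D.map (algebraMap ℝ ℂ)) = ((D.eval E : ℝ) : ℂ) := by
    rw [← Complex.coe_algebraMap, eval_map_algebraMap, aeval_algebraMap_apply_eq_algebraMap_eval]
  simp only [hev, Complex.norm_real, Real.norm_eq_abs, mul_one] at hle
  exact abs_le.1 hle

/-- the spectrum of a `K`-periodic discrete Schrödinger operator is the
union of at most `K` closed real intervals (spectral bands). -/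
theorem stmt8 (K : ℕ) (hK : 1 ≤ K) (v : ℤ → ℝ)
    (hper : ∀ n : ℤ, v (n + (K : ℤ)) = v n)
    (H : lp (fun _ : ℤ => ℂ) 2 →L[ℂ] lp (fun _ : ℤ => ℂ) 2)
    (hH : ∀ x : lp (fun _ : ℤ => ℂ) 2, ∀ n : ℤ,
      H x n = x (n + 1) + x (n - 1) + (v n : ℂ) * x n) :
    ∃ a b : Fin K → ℝ,
      (∀ i : Fin K, a i ≤ b i) ∧
      (∀ i j : Fin K, i < j → b i ≤ a j) ∧
      spectrum ℂ H = (fun t : ℝ => (t : ℂ)) '' (⋃ i : Fin K, Set.Icc (a i) (b i)) := by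
  obtain ⟨φ, hφ0, hφ1, hφ⟩ := exists_solution (fun n => X - C (v n)) (1 : ℝ[X]) 0
  obtain ⟨ψ, hψ0, hψ1, hψ⟩ := exists_solution (fun n => X - C (v n)) (0 : ℝ[X]) 1
  set S : Set ℝ := (fun t : ℝ => (t : ℂ)) ⁻¹' spectrum ℂ H with hS
  have hσ : spectrum ℂ H = (fun t : ℝ => (t : ℂ)) '' S := by
    rw [hS, Set.image_preimage_eq_of_subset]
    exact fun z hz =>
      ⟨z.re, ((isSelfAdjoint_schrodinger v H hH).mem_spectrum_eq_re hz).symm⟩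
  have : Nontrivial (lp (fun _ : ℤ => ℂ) 2) := by
    refine ⟨lp.single 2 0 (1 : ℂ), 0, fun h => ?_⟩
    have := congrArg (fun x : lp (fun _ : ℤ => ℂ) 2 => x 0) h
    simp at this
  have hne : S.Nonempty := by
    have := spectrum.nonempty H
    rw [hσ] at this
    exact this.of_image
  have hc : IsCompact S :=
    Complex.isometry_ofReal.isClosedEmbedding.isCompact_preimage (spectrum.isCompact H)
  obtain ⟨a, b, hab, hlt, hU⟩ := isBandUnion_of_polynomial K hK (φ K + ψ (K + 1))
    (natDegree_discriminant K hK v φ ψ hφ hψ hφ0 hφ1 hψ0 hψ1) S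
    (fun t => ⟨discriminant_mem_of_mem_spectrum K v hper H hH φ ψ hφ hψ hφ0 hφ1 hψ0 hψ1 t,
      mem_spectrum_of_discriminant K hK v hper H hH φ ψ hφ hψ hφ0 hφ1 hψ0 hψ1 t⟩) hc hne
  exact ⟨a, b, hab, hlt, by rw [hσ, hU]⟩
end
end
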